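/- arXiv:2404.17678 — 2 statements merged into one kernel-verified Lean document; each statement's English description precedes it below -/
import Mathlib

section
/- Let n and m be positive integers and let q be a prime power with q ≡ 1 (mod n). Let ζ_n be a primitive n-th root of unity in F_q^* (an element of multiplicative order n) and let χ_n be a multiplicative character of F_q^* of order n. Then for all multiplicative characters A_1,…,A_m, B_1,…,B_m of F_q^* and all λ ∈ F_q, Σ_{l=0}^{n−1} _mF_m(A_1^n,…,A_m^n; B_1^n,…,B_m^n | ζ_n^l · λ)_q = _{nm}F_{nm}( (A_i χ_n^l : 1 ≤ i ≤ m, 0 ≤ l ≤ n−1) ; (B_i χ_n^l : 1 ≤ i ≤ m, 0 ≤ l ≤ n−1) | λ^n )_q, where the right-hand side is the hypergeometric function of order nm whose upper parameters are the nm characters A_i χ_n^l and whose lower parameters are the nm characters B_i χ_n^l. -/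
/-- The finite field hypergeometric function `ₘFₘ` of McCarthy, with upper parameters `A`,
lower parameters `B` (indexed by a finite type `ι`), and argument `lam`. -/
noncomputable def ffHyp {F : Type} [Field F] [Fintype F] (θ : AddChar F ℂ)
    {ι : Type} [Fintype ι] (A B : ι → MulChar F ℂ) (lam : F) : ℂ :=
  letI : Fintype (MulChar F ℂ) := Fintype.ofFinite _
  (-1 : ℂ) / ((Fintype.card F : ℂ) - 1) *
    ∑ χ : MulChar F ℂ,
      (∏ i, (gaussSum (A i * χ) θ / gaussSum (A i) θ) *
        (gaussSum ((B i * χ)⁻¹) θ / gaussSum ((B i)⁻¹) θ)) *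
      χ (-1) ^ (Fintype.card ι) * χ lam

/-!
If a character `e` of a finite cyclic group has order `n`, then each `z` has `∑_{l < n} e(z)^l`
`n`-th roots. For the character group of `F` and `e` the evaluation at `ζ`, this turns the
sum over the arguments `ζ ^ l * lam` into a sum over characters `ψ ^ n`, and the summands then agree
by the Hasse–Davenport product formula `C(n)^n * ∏ g(C * χₙ^l) * g(1) = ∏ g(χₙ^l) * g(C^n)` for
Gauss sums `g`.

The product formula comes from `L`-series over `F[X]`. Let `φ(f) = C(∏ f(-c))` if `f(0) ≠ 0` and
`φ(f) = 0` otherwise, where `c` runs over the `n`-th roots of unity. The same count of roots, in the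
unit group of every finite extension of `F`, shows that `L(φ)` and the product over `l` of the
`L`-series of `f ↦ χₙ^l(f(0)) * C(f(-1))` have equal logarithmic derivatives: their coefficients are
character sums over field polynomials. So the two sides are equal. All these series are polynomials,
and by Lagrange interpolation their top coefficients are Jacobi sums, hence quotients of Gauss sums.
-/

namespace HasseDavenport

open Finset

section PowerSeries

open PowerSeries

lemma coeff_card_prod_of_coeff_eq_zero {R ι : Type*} [CommSemiring R] (s : Finset ι)
    {f : ι → R⟦X⟧} (hf : ∀ i ∈ s, ∀ k, 2 ≤ k → coeff k (f i) = 0) :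
    coeff #s (∏ i ∈ s, f i) = ∏ i ∈ s, coeff 1 (f i) := by
  have htrunc : ∏ i ∈ s, f i = ((∏ i ∈ s, trunc 2 (f i) : Polynomial R) : R⟦X⟧) := by
    rw [← Polynomial.coeToPowerSeries.ringHom_apply, map_prod]
    refine prod_congr rfl fun i hi => ?_
    ext k
    rw [Polynomial.coeToPowerSeries.ringHom_apply, Polynomial.coeff_coe, coeff_trunc]
    split_ifs with hk
    · rfl
    · exact hf i hi k (not_lt.1 hk)
  have hdeg (i : ι) : (trunc 2 (f i)).natDegree ≤ 1 :=
    Nat.le_of_lt_succ (natDegree_trunc_lt (f i) 1)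
  have hcoeff := Polynomial.coeff_prod_of_natDegree_le s (fun i => trunc 2 (f i)) 1
    fun i _ => hdeg i
  rw [mul_one] at hcoeff
  rw [htrunc, Polynomial.coeff_coe, hcoeff]
  simp [coeff_trunc]

variable {R : Type*} [CommRing R]

lemma coeff_X_mul_derivative (f : R⟦X⟧) (k : ℕ) :
    coeff k (X * d⁄dX R f) = k * coeff k f := by
  cases k with
  | zero => simp
  | succ k => rw [coeff_succ_X_mul, coeff_derivative, mul_comm, Nat.cast_succ]

lemma eq_zero_of_X_mul_derivative_eq [NoZeroDivisors R] [CharZero R] {Q f : R⟦X⟧}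
    (hQ : constantCoeff Q = 0) (hf : X * d⁄dX R f = Q * f)
    (hf0 : constantCoeff f = 0) : f = 0 := by
  ext k
  induction k using Nat.strong_induction_on with
  | _ k ih =>
    rcases Nat.eq_zero_or_pos k with rfl | hk
    · simpa using hf0
    · have hcoeff : (k : R) * coeff k f = 0 := by
        rw [← coeff_X_mul_derivative, hf, coeff_mul]
        refine sum_eq_zero fun ij hij => ?_
        rw [HasAntidiagonal.mem_antidiagonal] at hij
        rcases Nat.eq_zero_or_pos ij.1 with hi | hi
        · rw [hi, coeff_zero_eq_constantCoeff_apply, hQ, zero_mul]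
        · rw [ih ij.2 (by omega), map_zero, mul_zero]
      simpa [hk.ne'] using hcoeff

lemma eq_of_X_mul_derivative_eq [NoZeroDivisors R] [CharZero R] {Q f g : R⟦X⟧}
    (hQ : constantCoeff Q = 0) (hf : X * d⁄dX R f = Q * f)
    (hg : X * d⁄dX R g = Q * g)
    (hfg : constantCoeff f = constantCoeff g) : f = g := by
  refine sub_eq_zero.1 (eq_zero_of_X_mul_derivative_eq hQ ?_ (by rw [map_sub, hfg, sub_self]))
  rw [map_sub, mul_sub, hf, hg, mul_sub]

lemma X_mul_derivative_prod {ι : Type*} (s : Finset ι) {Q f : ι → R⟦X⟧}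
    (hf : ∀ l, X * d⁄dX R (f l) = Q l * f l) :
    X * d⁄dX R (∏ l ∈ s, f l) = (∑ l ∈ s, Q l) * ∏ l ∈ s, f l := by
  classical
  induction s using Finset.induction_on with
  | empty => simp
  | insert a s ha ih =>
    rw [prod_insert ha, sum_insert ha, Derivation.leibniz, smul_eq_mul, smul_eq_mul, mul_add,
      mul_left_comm, ih, mul_left_comm X (∏ l ∈ s, _), hf a]
    ring

end PowerSeries

section LSeries

open Polynomial UniqueFactorizationMonoid

variable {F : Type*} [Field F]

open Classical in
/-- The von Mangoldt function of `F[X]`, with `deg` in place of `log`: it sends a power `P ^ j`,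
`j ≥ 1`, of an irreducible `P` to `deg P` and everything else to `0`. -/
noncomputable def vonMangoldt (f : F[X]) : ℕ :=
  if IsPrimePow f then (radical f).natDegree else 0

lemma vonMangoldt_pow {P : F[X]} (hP : Irreducible P) {j : ℕ} (hj : j ≠ 0) :
    vonMangoldt (P ^ j) = P.natDegree := by
  classical
  rw [vonMangoldt, if_pos (hP.prime.isPrimePow.pow hj), radical_pow_of_prime hP.prime hj,
    natDegree_eq_of_degree_eq degree_normalize]

lemma exists_pow_eq_of_isPrimePow {f : F[X]} (hf : f.Monic) (h : IsPrimePow f) :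
    ∃ (P : F[X]) (j : ℕ), P.Monic ∧ Irreducible P ∧ 0 < j ∧ P ^ j = f := by
  classical
  obtain ⟨P, j, hP, hj, rfl⟩ := h
  refine ⟨normalize P, j, monic_normalize hP.ne_zero,
    (normalize_associated P).irreducible_iff.2 hP.irreducible, hj, ?_⟩
  exact (map_pow normalizeHom P j).symm.trans hf.normalize_eq_self

lemma eq_and_eq_of_pow_eq_pow {P Q : F[X]} (hP : Irreducible P) (hPm : P.Monic)
    (hQ : Irreducible Q) (hQm : Q.Monic) {i j : ℕ} (hi : i ≠ 0) (hj : j ≠ 0)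
    (h : P ^ i = Q ^ j) : P = Q ∧ i = j := by
  classical
  have hrad := congrArg radical h
  rw [radical_pow_of_prime hP.prime hi, hPm.normalize_eq_self,
    radical_pow_of_prime hQ.prime hj, hQm.normalize_eq_self] at hrad
  subst hrad
  have hdeg := congrArg natDegree h
  rw [natDegree_pow, natDegree_pow] at hdeg
  exact ⟨rfl, Nat.eq_of_mul_eq_mul_right hP.natDegree_pos hdeg⟩

open Classical in
lemma pow_dvd_iff_le_count {P g : F[X]} (hP : Irreducible P) (hPm : P.Monic) (hg : g ≠ 0)
    (j : ℕ) : P ^ j ∣ g ↔ j ≤ (normalizedFactors g).count P := by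
  rw [pow_dvd_iff_le_emultiplicity, emultiplicity_eq_count_normalizedFactors hP hg,
    hPm.normalize_eq_self, Nat.cast_le]

open Classical in
/-- The pairs `(P, j)`, with `P` monic irreducible and `j ≥ 1`, such that `P ^ j` divides `g`. -/
noncomputable def primePowerDivisors (g : F[X]) : Finset (Σ _ : F[X], ℕ) :=
  (normalizedFactors g).toFinset.sigma fun P => Icc 1 ((normalizedFactors g).count P)

lemma mem_primePowerDivisors {P g : F[X]} (hg : g.Monic) {j : ℕ} :
    ⟨P, j⟩ ∈ primePowerDivisors g ↔ Irreducible P ∧ P.Monic ∧ 0 < j ∧ P ^ j ∣ g := by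
  classical
  simp only [primePowerDivisors, mem_sigma, Multiset.mem_toFinset, mem_Icc,
    Polynomial.mem_normalizedFactors_iff hg.ne_zero]
  constructor
  · rintro ⟨⟨hP, hPm, -⟩, hj, hle⟩
    exact ⟨hP, hPm, hj, (pow_dvd_iff_le_count hP hPm hg.ne_zero j).2 hle⟩
  · rintro ⟨hP, hPm, hj, hdvd⟩
    exact ⟨⟨hP, hPm, (dvd_pow_self P hj.ne').trans hdvd⟩, hj,
      (pow_dvd_iff_le_count hP hPm hg.ne_zero j).1 hdvd⟩

lemma natDegree_eq_sum_primePowerDivisors {g : F[X]} (hg : g.Monic) :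
    g.natDegree = ∑ Pj ∈ primePowerDivisors g, Pj.1.natDegree := by
  classical
  have hprod := leadingCoeff_mul_prod_normalizedFactors g
  rw [hg.leadingCoeff, C_1, one_mul] at hprod
  conv_lhs => rw [← hprod]
  rw [natDegree_multiset_prod_of_monic _ fun f hf =>
    ((Polynomial.mem_normalizedFactors_iff hg.ne_zero).1 hf).2.1, sum_multiset_map_count,
    primePowerDivisors, sum_sigma]
  simp

variable [Finite F]

variable (F) in
lemma finite_setOf_monic_natDegree_eq (k : ℕ) : {f : F[X] | f.Monic ∧ f.natDegree = k}.Finite :=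
  Finite.of_equiv (Fin k → F) ((monicEquivDegreeLT k).trans (degreeLTEquiv F k).toEquiv).symm

variable (F) in
/-- The monic polynomials of degree `k` over a finite field. -/
noncomputable def monicOfDegree (k : ℕ) : Finset F[X] :=
  (finite_setOf_monic_natDegree_eq F k).toFinset

lemma mem_monicOfDegree {k : ℕ} {f : F[X]} :
    f ∈ monicOfDegree F k ↔ f.Monic ∧ f.natDegree = k := by
  simp [monicOfDegree]

lemma monicOfDegree_zero : monicOfDegree F 0 = {1} := by
  ext f
  rw [mem_monicOfDegree, mem_singleton]
  exact ⟨fun h => eq_one_of_monic_natDegree_zero h.1 h.2, by rintro rfl; simp⟩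

open Classical in
lemma sum_vonMangoldt_of_dvd {g : F[X]} (hg : g.Monic) :
    ∑ i ∈ range (g.natDegree + 1), ∑ f ∈ monicOfDegree F i with f ∣ g, vonMangoldt f =
      g.natDegree := by
  rw [sum_sigma']
  conv_rhs => rw [natDegree_eq_sum_primePowerDivisors hg]
  symm
  refine sum_of_injOn (fun Pj => ⟨(Pj.1 ^ Pj.2).natDegree, Pj.1 ^ Pj.2⟩) ?_ ?_ ?_ ?_
  · rintro ⟨P, j⟩ hPj ⟨Q, k⟩ hQk h
    obtain ⟨hP, hPm, hj, -⟩ := (mem_primePowerDivisors hg).1 hPj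
    obtain ⟨hQ, hQm, hk, -⟩ := (mem_primePowerDivisors hg).1 hQk
    have hpow : P ^ j = Q ^ k := by simpa using (Sigma.mk.inj h).2
    obtain ⟨rfl, rfl⟩ := eq_and_eq_of_pow_eq_pow hP hPm hQ hQm hj.ne' hk.ne' hpow
    rfl
  · rintro ⟨P, j⟩ hPj
    obtain ⟨-, hPm, -, hdvd⟩ := (mem_primePowerDivisors hg).1 hPj
    simp only [coe_sigma, Set.mem_sigma_iff, mem_coe, mem_range, mem_filter, mem_monicOfDegree]
    exact ⟨Nat.lt_succ_of_le (natDegree_le_of_dvd hdvd hg.ne_zero),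
      ⟨hPm.pow j, trivial⟩, hdvd⟩
  · rintro ⟨i, f⟩ hf hnot
    simp only [mem_sigma, mem_filter, mem_monicOfDegree] at hf
    by_contra hne
    obtain ⟨P, j, hPm, hP, hj, rfl⟩ :=
      exists_pow_eq_of_isPrimePow hf.2.1.1 (ite_ne_right_iff.1 hne).1
    exact hnot ⟨⟨P, j⟩, (mem_primePowerDivisors hg).2 ⟨hP, hPm, hj, hf.2.2⟩,
      by simp [← hf.2.1.2]⟩
  · rintro ⟨P, j⟩ hPj
    obtain ⟨hP, -, hj, -⟩ := (mem_primePowerDivisors hg).1 hPj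
    exact (vonMangoldt_pow hP hj.ne').symm

variable {R : Type*}

/-- Complete multiplicativity on the monoid of monic polynomials. -/
structure IsMultiplicativeOnMonics [CommSemiring R] (φ : F[X] → R) : Prop where
  map_one : φ 1 = 1
  map_mul : ∀ {f g : F[X]}, f.Monic → g.Monic → φ (f * g) = φ f * φ g

/-- The `L`-series `∑ φ(f) T ^ deg f` over the monic polynomials `f`. -/
noncomputable def lSeries [CommSemiring R] (φ : F[X] → R) : PowerSeries R :=
  .mk fun k => ∑ f ∈ monicOfDegree F k, φ f

variable [CommRing R]

open Classical in
lemma sum_monicOfDegree_of_dvd {φ : F[X] → R} (hφ : IsMultiplicativeOnMonics φ) {f : F[X]}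
    {i : ℕ} (hf : f ∈ monicOfDegree F i) (j : ℕ) :
    ∑ g ∈ monicOfDegree F (i + j) with f ∣ g, φ g = φ f * ∑ h ∈ monicOfDegree F j, φ h := by
  obtain ⟨hfm, hfi⟩ := mem_monicOfDegree.1 hf
  rw [mul_sum]
  symm
  refine sum_bij (fun h _ => f * h) ?_ ?_ ?_ ?_
  · intro h hh
    obtain ⟨hm, hj⟩ := mem_monicOfDegree.1 hh
    rw [mem_filter, mem_monicOfDegree]
    exact ⟨⟨hfm.mul hm, by rw [hfm.natDegree_mul hm, hfi, hj]⟩, dvd_mul_right _ _⟩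
  · exact fun _ _ _ _ h => mul_left_cancel₀ hfm.ne_zero h
  · intro g hg
    rw [mem_filter, mem_monicOfDegree] at hg
    obtain ⟨⟨hgm, hdeg⟩, h, rfl⟩ := hg
    have hhm : h.Monic := hfm.of_mul_monic_left hgm
    rw [hfm.natDegree_mul hhm, hfi] at hdeg
    exact ⟨h, mem_monicOfDegree.2 ⟨hhm, by omega⟩, rfl⟩
  · exact fun h hh => (hφ.map_mul hfm (mem_monicOfDegree.1 hh).1).symm

/-- The coefficientwise form `∑ Λ(f) φ(f) T ^ deg f` of the logarithmic derivative
`T L' / L` of the `L`-series. -/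
noncomputable def lSeriesLogDeriv (φ : F[X] → R) : PowerSeries R :=
  .mk fun k => ∑ f ∈ monicOfDegree F k, vonMangoldt f * φ f

lemma X_mul_derivative_lSeries {φ : F[X] → R} (hφ : IsMultiplicativeOnMonics φ) :
    PowerSeries.X * PowerSeries.derivative R (lSeries φ) = lSeriesLogDeriv φ * lSeries φ := by
  classical
  ext k
  rw [coeff_X_mul_derivative, PowerSeries.coeff_mul, Nat.sum_antidiagonal_eq_sum_range_succ_mk]
  simp only [lSeries, lSeriesLogDeriv, PowerSeries.coeff_mk]
  calc (k : R) * ∑ g ∈ monicOfDegree F k, φ g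
      = ∑ g ∈ monicOfDegree F k, ∑ i ∈ range (k + 1), ∑ f ∈ monicOfDegree F i,
          if f ∣ g then vonMangoldt f * φ g else 0 := by
        rw [mul_sum]
        refine sum_congr rfl fun g hg => ?_
        obtain ⟨hgm, rfl⟩ := mem_monicOfDegree.1 hg
        conv_lhs => rw [← sum_vonMangoldt_of_dvd hgm]
        simp only [Nat.cast_sum, sum_mul, sum_filter, Nat.cast_ite, Nat.cast_zero, ite_mul,
          zero_mul]
    _ = ∑ i ∈ range (k + 1), ∑ f ∈ monicOfDegree F i,
          vonMangoldt f * ∑ g ∈ monicOfDegree F k with f ∣ g, φ g := by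
        rw [sum_comm]
        refine sum_congr rfl fun i _ => ?_
        rw [sum_comm]
        simp only [mul_sum, sum_filter, mul_ite, mul_zero]
    _ = ∑ i ∈ range (k + 1), (∑ f ∈ monicOfDegree F i, vonMangoldt f * φ f) *
          ∑ g ∈ monicOfDegree F (k - i), φ g := by
        refine sum_congr rfl fun i hi => ?_
        rw [sum_mul]
        refine sum_congr rfl fun f hf => ?_
        have hk : i + (k - i) = k := by rw [mem_range] at hi; omega
        rw [mul_assoc, ← sum_monicOfDegree_of_dvd hφ hf, hk]

lemma constantCoeff_lSeries {φ : F[X] → R} (hφ : IsMultiplicativeOnMonics φ) :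
    PowerSeries.constantCoeff (lSeries φ) = 1 := by
  simp [← PowerSeries.coeff_zero_eq_constantCoeff_apply, lSeries, monicOfDegree_zero, hφ.map_one]

lemma constantCoeff_lSeriesLogDeriv (φ : F[X] → R) :
    PowerSeries.constantCoeff (lSeriesLogDeriv φ) = 0 := by
  simp [← PowerSeries.coeff_zero_eq_constantCoeff_apply, lSeriesLogDeriv, monicOfDegree_zero,
    vonMangoldt, not_isPrimePow_one]

theorem lSeries_eq_prod [NoZeroDivisors R] [CharZero R] {ι : Type*} (s : Finset ι)
    {φ : F[X] → R} {ψ : ι → F[X] → R} (hφ : IsMultiplicativeOnMonics φ)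
    (hψ : ∀ l, IsMultiplicativeOnMonics (ψ l))
    (h : lSeriesLogDeriv φ = ∑ l ∈ s, lSeriesLogDeriv (ψ l)) :
    lSeries φ = ∏ l ∈ s, lSeries (ψ l) := by
  refine eq_of_X_mul_derivative_eq (constantCoeff_lSeriesLogDeriv φ)
    (X_mul_derivative_lSeries hφ) ?_ ?_
  · rw [h, X_mul_derivative_prod s fun l => X_mul_derivative_lSeries (hψ l)]
  · simp [constantCoeff_lSeries, hφ, hψ]

end LSeries

section FieldPoly

open Polynomial UniqueFactorizationMonoid

variable {F K : Type*} [Field F] [Field K] [Algebra F K]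

open Classical in
lemma card_minpoly_eq [Fintype K] {P : F[X]} (hP : Irreducible P) (hPm : P.Monic)
    (hdvd : P.natDegree ∣ Module.finrank F K) :
    #{x : K | minpoly F x = P} = P.natDegree := by
  have : Finite F := Finite.of_injective _ (algebraMap F K).injective
  obtain ⟨x, hx⟩ : ∃ x : K, aeval x P = 0 := by
    have : Fact (Irreducible P) := ⟨hP⟩
    have : FiniteDimensional F (AdjoinRoot P) := (AdjoinRoot.powerBasis hP.ne_zero).finite
    have : Finite (AdjoinRoot P) := Module.finite_of_finite F
    rw [← AdjoinRoot.powerBasis_dim hP.ne_zero, ← PowerBasis.finrank] at hdvd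
    obtain ⟨f⟩ := FiniteField.nonempty_algHom_of_finrank_dvd hdvd
    exact ⟨f (AdjoinRoot.root P), by
      rw [aeval_algHom_apply, AdjoinRoot.aeval_eq, AdjoinRoot.mk_self, map_zero]⟩
  obtain rfl : P = minpoly F x := minpoly.eq_of_irreducible_of_monic hP hx hPm
  rw [← card_rootSet_eq_natDegree (Algebra.IsSeparable.isSeparable F x)
    (Normal.splits inferInstance x), ← Set.toFinset_card]
  congr 1
  ext y
  simp only [Set.mem_toFinset, mem_filter, mem_univ, true_and, mem_rootSet]
  exact ⟨fun h => h ▸ ⟨minpoly.ne_zero (Algebra.IsIntegral.isIntegral y), minpoly.aeval F y⟩,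
    fun h => (minpoly.eq_of_irreducible_of_monic hP h.2 hPm).symm⟩

variable (F)

/-- The field polynomial (characteristic polynomial of multiplication) of `x ∈ K` over `F`,
encoded as the power of the minimal polynomial of degree `[K : F]`. -/
noncomputable def fieldPoly (x : K) : F[X] :=
  minpoly F x ^ (Module.finrank F K / (minpoly F x).natDegree)

section FiniteDimensional

variable [FiniteDimensional F K]

lemma fieldPoly_exponent_mul_natDegree (x : K) :
    Module.finrank F K / (minpoly F x).natDegree * (minpoly F x).natDegree =
      Module.finrank F K :=
  Nat.div_mul_cancel (minpoly.degree_dvd (Algebra.IsIntegral.isIntegral x))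

lemma fieldPoly_mem_monicOfDegree [Finite F] (x : K) :
    fieldPoly F x ∈ monicOfDegree F (Module.finrank F K) :=
  mem_monicOfDegree.2 ⟨(minpoly.monic (Algebra.IsIntegral.isIntegral x)).pow _, by
    rw [fieldPoly, natDegree_pow, fieldPoly_exponent_mul_natDegree]⟩

lemma fieldPoly_exponent_ne_zero (x : K) :
    Module.finrank F K / (minpoly F x).natDegree ≠ 0 :=
  left_ne_zero_of_mul
    ((fieldPoly_exponent_mul_natDegree F x).trans_ne Module.finrank_pos.ne')

lemma norm_sub_algebraMap (x : K) (c : F) :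
    Algebra.norm F (x - algebraMap F K c) =
      (-1) ^ Module.finrank F K * (fieldPoly F x).eval c := by
  have hint (y : K) : IsIntegral F y := Algebra.IsIntegral.isIntegral y
  set y := x - algebraMap F K c
  have hmin : minpoly F y = (minpoly F x).comp (X + C c) := minpoly.sub_algebraMap x c
  have hdeg : (minpoly F y).natDegree = (minpoly F x).natDegree := by
    rw [hmin, natDegree_comp, natDegree_X_add_C, mul_one]
  have hgen := Algebra.PowerBasis.norm_gen_eq_coeff_zero_minpoly
    (IntermediateField.adjoin.powerBasis (hint y))
  rw [IntermediateField.adjoin.powerBasis_gen, IntermediateField.adjoin.powerBasis_dim,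
    IntermediateField.minpoly_gen] at hgen
  have hfinrank := Module.finrank_mul_finrank F (IntermediateField.adjoin F {y}) K
  rw [IntermediateField.adjoin.finrank (hint y), hdeg] at hfinrank
  rw [Algebra.norm_eq_norm_adjoin, hgen, hdeg, fieldPoly, ← hfinrank,
    Nat.mul_div_cancel_left _ (minpoly.natDegree_pos (hint x)), mul_pow, ← pow_mul, eval_pow,
    hmin, coeff_zero_eq_eval_zero, eval_comp]
  simp

lemma eval_fieldPoly (x : K) (c : F) :
    (fieldPoly F x).eval c = Algebra.norm F (algebraMap F K c - x) := by
  have hneg : algebraMap F K c - x = algebraMap F K (-1) * (x - algebraMap F K c) := by simp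
  rw [hneg, map_mul, Algebra.norm_algebraMap, norm_sub_algebraMap, ← mul_assoc, ← mul_pow,
    neg_one_mul, neg_neg, one_pow, one_mul]

end FiniteDimensional

variable {F}

open Classical in
lemma card_fieldPoly_eq [Finite F] [Fintype K] {f : F[X]}
    (hf : f ∈ monicOfDegree F (Module.finrank F K)) :
    #{x : K | fieldPoly F x = f} = vonMangoldt f := by
  obtain ⟨hfm, hdeg⟩ := mem_monicOfDegree.1 hf
  have hint (x : K) : IsIntegral F x := Algebra.IsIntegral.isIntegral x
  by_cases h : IsPrimePow f
  · obtain ⟨P, j, hPm, hP, hj, rfl⟩ := exists_pow_eq_of_isPrimePow hfm h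
    rw [natDegree_pow] at hdeg
    rw [vonMangoldt_pow hP hj.ne', ← card_minpoly_eq hP hPm (Dvd.intro_left j hdeg)]
    congr 1 with x
    simp only [mem_filter, mem_univ, true_and]
    refine ⟨fun hx => (eq_and_eq_of_pow_eq_pow (minpoly.irreducible (hint x))
      (minpoly.monic (hint x)) hP hPm (fieldPoly_exponent_ne_zero F x) hj.ne' hx).1, ?_⟩
    rintro rfl
    rw [fieldPoly, ← hdeg, Nat.mul_div_cancel _ (minpoly.natDegree_pos (hint x))]
  · rw [vonMangoldt, if_neg h, card_eq_zero, filter_eq_empty_iff]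
    rintro x - rfl
    exact h ((minpoly.prime (hint x)).isPrimePow.pow (fieldPoly_exponent_ne_zero F x))

lemma coeff_finrank_lSeriesLogDeriv [Finite F] [Fintype K] {R : Type*} [CommRing R]
    (φ : F[X] → R) :
    PowerSeries.coeff (Module.finrank F K) (lSeriesLogDeriv φ) = ∑ x : K, φ (fieldPoly F x) := by
  classical
  rw [lSeriesLogDeriv, PowerSeries.coeff_mk,
    ← sum_fiberwise_of_maps_to (g := fieldPoly F) (t := monicOfDegree F (Module.finrank F K))
      fun x _ => fieldPoly_mem_monicOfDegree F x]
  refine sum_congr rfl fun f hf => ?_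
  rw [sum_congr rfl fun x hx => by rw [(mem_filter.1 hx).2], sum_const, card_fieldPoly_eq hf,
    nsmul_eq_mul]

end FieldPoly

section Evaluation

variable {F R : Type*} [CommMonoid F] [CommMonoidWithZero R]

/-- Evaluation of multiplicative characters at a unit, as a monoid homomorphism on the group of
characters. -/
@[simps]
def evalUnit (a : Fˣ) : MulChar F R →* R where
  toFun χ := χ a
  map_one' := MulChar.one_apply_coe a
  map_mul' χ ψ := MulChar.mul_apply χ ψ a

lemma mulChar_prod_apply_coe {ι : Type*} (s : Finset ι) (χ : ι → MulChar F R) (a : Fˣ) :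
    (∏ i ∈ s, χ i) a = ∏ i ∈ s, χ i a :=
  map_prod (evalUnit a) χ s

end Evaluation

section JacobiSum

variable {F R ι : Type*} [Field F] [Fintype F] [CommRing R] [Fintype ι]

open Classical in
/-- The Jacobi sum in several variables `∑ ∏ χ i (r i)` over the hyperplane `∑ r i = t`. -/
noncomputable def multiJacobiSum (χ : ι → MulChar F R) (t : F) : R :=
  ∑ r : ι → F with ∑ i, r i = t, ∏ i, χ i (r i)

lemma multiJacobiSum_units_mul (χ : ι → MulChar F R) (a : Fˣ) (t : F) :
    multiJacobiSum χ (a * t) = (∏ i, χ i) a * multiJacobiSum χ t := by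
  classical
  rw [multiJacobiSum, multiJacobiSum, mul_sum]
  symm
  refine sum_equiv (Equiv.piCongrRight fun _ => Units.mulLeft a) (fun r => ?_) fun r _ => ?_
  · simp [← mul_sum]
  · simp [prod_mul_distrib, mulChar_prod_apply_coe]

variable [IsDomain R] {χ : ι → MulChar F R}

lemma multiJacobiSum_zero (hχ : ∏ i, χ i ≠ 1) : multiJacobiSum χ 0 = 0 := by
  obtain ⟨a, ha⟩ := MulChar.ne_one_iff.1 hχ
  refine eq_zero_of_mul_eq_self_left ha ?_
  rw [← multiJacobiSum_units_mul, mul_zero]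

theorem multiJacobiSum_one_mul_gaussSum (θ : AddChar F R) (hχ : ∏ i, χ i ≠ 1) :
    multiJacobiSum χ 1 * gaussSum (∏ i, χ i) θ = ∏ i, gaussSum (χ i) θ := by
  classical
  have hscale (t : F) :
      multiJacobiSum χ 1 * (∏ i, χ i) t = multiJacobiSum χ t := by
    rcases eq_or_ne t 0 with rfl | ht
    · rw [MulChar.map_zero, mul_zero, multiJacobiSum_zero hχ]
    · simpa [mul_comm] using (multiJacobiSum_units_mul χ (Units.mk0 t ht) 1).symm
  calc multiJacobiSum χ 1 * gaussSum (∏ i, χ i) θ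
      = ∑ t, multiJacobiSum χ t * θ t := by
        rw [gaussSum, mul_sum]
        exact sum_congr rfl fun t _ => by rw [← mul_assoc, hscale]
    _ = ∑ t, ∑ r : ι → F with ∑ i, r i = t, ∏ i, χ i (r i) * θ (r i) := by
        refine sum_congr rfl fun t _ => ?_
        rw [multiJacobiSum, sum_mul]
        refine sum_congr rfl fun r hr => ?_
        have hθ : θ (∑ i, r i) = ∏ i, θ (r i) :=
          map_prod θ.toMonoidHom (fun i => Multiplicative.ofAdd (r i)) univ
        rw [← (mem_filter.1 hr).2, hθ, prod_mul_distrib]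
    _ = ∏ i, gaussSum (χ i) θ := by
        refine (sum_fiberwise univ (fun r : ι → F => ∑ i, r i) _).trans ?_
        rw [← Fintype.piFinset_univ]
        exact (prod_univ_sum (fun _ => univ) fun i t => χ i t * θ t).symm

end JacobiSum

section ResidueChar

open Polynomial

variable {F R ι : Type*} [Field F] [CommRing R] [Fintype ι]

/-- The Dirichlet character `g ↦ ∏ χ i (g (v i))` of `F[X]`, whose modulus is supported on the
linear polynomials `X - v i`. -/
noncomputable def residueChar (v : ι → F) (χ : ι → MulChar F R) (g : F[X]) : R :=
  ∏ i, χ i (g.eval (v i))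

lemma isMultiplicativeOnMonics_residueChar (v : ι → F) (χ : ι → MulChar F R) :
    IsMultiplicativeOnMonics (residueChar v χ) where
  map_one := by simp [residueChar]
  map_mul _ _ := by simp [residueChar, prod_mul_distrib]

variable {v : ι → F} {χ : ι → MulChar F R}

open Classical in
lemma eval_derivative_nodal_eq (v : ι → F) (i : ι) :
    (derivative (Lagrange.nodal univ v)).eval (v i) = ∏ j ∈ univ.erase i, (v i - v j) := by
  rw [Lagrange.eval_nodal_derivative_eval_node_eq (mem_univ i), Lagrange.eval_nodal]

lemma eval_derivative_nodal_ne_zero (hv : Function.Injective v) (i : ι) :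
    (derivative (Lagrange.nodal univ v)).eval (v i) ≠ 0 := by
  classical
  rw [eval_derivative_nodal_eq, prod_ne_zero_iff]
  exact fun j hj => sub_ne_zero.2 (hv.ne (ne_of_mem_erase hj).symm)

lemma coeff_pred_card_eq_sum (hv : Function.Injective v) {P : F[X]}
    (hP : P.degree < Fintype.card ι) : P.coeff (Fintype.card ι - 1) =
      ∑ i, P.eval (v i) / (derivative (Lagrange.nodal univ v)).eval (v i) := by
  classical
  simpa only [eval_derivative_nodal_eq, card_univ] using
    Lagrange.coeff_eq_sum (s := univ) hv.injOn hP

lemma sum_monicOfDegree_add [Finite F] (φ : F[X] → R) {k : ℕ} {h : F[X]} (hh : h.degree < k) :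
    ∑ g ∈ monicOfDegree F k, φ (g + h) = ∑ g ∈ monicOfDegree F k, φ g := by
  have hadd {g h : F[X]} (hh : h.degree < k) (hg : g ∈ monicOfDegree F k) :
      g + h ∈ monicOfDegree F k := by
    rw [mem_monicOfDegree] at hg ⊢
    have hlt : h.degree < g.degree := by rwa [degree_eq_natDegree hg.1.ne_zero, hg.2]
    exact ⟨hg.1.add_of_left hlt, (natDegree_add_eq_left_of_degree_lt hlt).trans hg.2⟩
  refine sum_nbij' (· + h) (· - h) (fun g hg => hadd hh hg) (fun g hg => ?_)
    (fun g _ => add_sub_cancel_right g h) (fun g _ => sub_add_cancel g h) fun _ _ => rfl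
  simpa [sub_eq_add_neg] using hadd (by rwa [degree_neg]) hg

theorem coeff_lSeries_residueChar_eq_zero [Finite F] [IsDomain R] [CharZero R]
    (hv : Function.Injective v) {i : ι} (hχ : χ i ≠ 1) {k : ℕ} (hk : Fintype.card ι ≤ k) :
    PowerSeries.coeff k (lSeries (residueChar v χ)) = 0 := by
  classical
  have : Fintype F := Fintype.ofFinite F
  set p : F[X] := Lagrange.nodal (univ.erase i) v with hp
  have hpi : p.eval (v i) ≠ 0 := by
    rw [hp, Lagrange.eval_nodal, prod_ne_zero_iff]
    exact fun j hj => sub_ne_zero.2 (hv.ne (ne_of_mem_erase hj).symm)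
  have hdeg (c : F) : (c • p).degree < k := by
    refine (degree_smul_le c p).trans_lt ?_
    rw [hp, Lagrange.degree_nodal, card_erase_of_mem (mem_univ i), card_univ]
    exact_mod_cast (Nat.sub_lt (Fintype.card_pos_iff.2 ⟨i⟩) one_pos).trans_le hk
  have hline (g : F[X]) : ∑ c : F, residueChar v χ (g + c • p) = 0 := by
    have hother (c : F) (j : ι) (hj : j ∈ univ.erase i) :
        (g + c • p).eval (v j) = g.eval (v j) := by
      simp [hp, Lagrange.eval_nodal_at_node hj]
    have hat (c : F) : residueChar v χ (g + c • p) =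
        χ i (g.eval (v i) + c * p.eval (v i)) * ∏ j ∈ univ.erase i, χ j (g.eval (v j)) := by
      rw [residueChar, ← mul_prod_erase _ _ (mem_univ i), eval_add, eval_smul, smul_eq_mul,
        prod_congr rfl fun j hj => by rw [hother c j hj]]
    have hsum : ∑ c, χ i (g.eval (v i) + c * p.eval (v i)) = ∑ x, χ i x :=
      ((Equiv.mulRight₀ _ hpi).trans (Equiv.addLeft (g.eval (v i)))).sum_comp (χ i)
    rw [sum_congr rfl fun c _ => hat c, ← sum_mul, hsum, MulChar.sum_eq_zero_of_ne_one hχ, zero_mul]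
  have hcard : (Fintype.card F : R) * ∑ g ∈ monicOfDegree F k, residueChar v χ g = 0 := by
    calc (Fintype.card F : R) * ∑ g ∈ monicOfDegree F k, residueChar v χ g
        = ∑ c : F, ∑ g ∈ monicOfDegree F k, residueChar v χ (g + c • p) := by
          simp [fun c => sum_monicOfDegree_add (residueChar v χ) (hdeg c)]
      _ = 0 := by rw [sum_comm]; simp only [hline, sum_const_zero]
  rw [lSeries, PowerSeries.coeff_mk]
  exact (mul_eq_zero.1 hcard).resolve_left (Nat.cast_ne_zero.2 Fintype.card_ne_zero)

theorem coeff_pred_card_lSeries_residueChar [Fintype F] [Nonempty ι]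
    (hv : Function.Injective v) :
    PowerSeries.coeff (Fintype.card ι - 1) (lSeries (residueChar v χ)) =
      (∏ i, χ i ((derivative (Lagrange.nodal univ v)).eval (v i))) * multiJacobiSum χ 1 := by
  classical
  set d : ι → F := fun i => (derivative (Lagrange.nodal univ v)).eval (v i)
  have hd0 (i : ι) : d i ≠ 0 := eval_derivative_nodal_ne_zero hv i
  have hlt {g : F[X]} (hg : g ∈ monicOfDegree F (Fintype.card ι - 1)) :
      g.degree < Fintype.card ι := by
    obtain ⟨hgm, hdeg⟩ := mem_monicOfDegree.1 hg
    rw [degree_eq_natDegree hgm.ne_zero, hdeg]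
    exact_mod_cast Nat.sub_lt Fintype.card_pos one_pos
  let G (r : ι → F) : F[X] := Lagrange.interpolate univ v fun i => r i * d i
  have heval (r : ι → F) (i : ι) : (G r).eval (v i) = r i * d i :=
    Lagrange.eval_interpolate_at_node _ hv.injOn (mem_univ i)
  have hdegG (r : ι → F) : (G r).degree < Fintype.card ι :=
    Lagrange.degree_interpolate_lt (s := univ) _ hv.injOn
  rw [lSeries, PowerSeries.coeff_mk, multiJacobiSum, mul_sum]
  refine sum_nbij' (fun g i => g.eval (v i) / d i) G ?_ ?_ ?_ ?_ ?_
  · intro g hg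
    rw [mem_filter, ← coeff_pred_card_eq_sum hv (hlt hg), ← (mem_monicOfDegree.1 hg).2]
    exact ⟨mem_univ _, (mem_monicOfDegree.1 hg).1⟩
  · intro r hr
    have hone : (G r).coeff (Fintype.card ι - 1) = 1 := by
      simpa only [coeff_pred_card_eq_sum hv (hdegG r), heval, d, mul_div_cancel_right₀ _ (hd0 _)]
        using (mem_filter.1 hr).2
    have hle : (G r).natDegree ≤ Fintype.card ι - 1 := Nat.le_sub_one_of_lt
      ((natDegree_lt_iff_degree_lt fun h => by simp [h] at hone).2 (hdegG r))
    exact mem_monicOfDegree.2 ⟨monic_of_natDegree_le_of_coeff_eq_one _ hle hone,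
      hle.antisymm (le_natDegree_of_ne_zero (hone ▸ one_ne_zero))⟩
  · intro g hg
    simp only [G, div_mul_cancel₀ _ (hd0 _)]
    exact (Lagrange.eq_interpolate hv.injOn (hlt hg)).symm
  · intro r _
    funext i
    rw [heval, mul_div_cancel_right₀ _ (hd0 i)]
  · intro g _
    rw [residueChar, ← prod_mul_distrib]
    exact prod_congr rfl fun i _ => by rw [← map_mul, mul_div_cancel₀ _ (hd0 i)]

end ResidueChar

section CyclicGroup

variable {G R : Type*} [CommGroup G] [IsCyclic G] [CommRing R]

lemma card_pow_eq_one_of_dvd [Fintype G] [DecidableEq G] {n : ℕ} (hn : n ∣ Fintype.card G) :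
    #{y : G | y ^ n = 1} = n := by
  calc #{y : G | y ^ n = 1} = Nat.card (powMonoidHom n : G →* G).ker :=
        (Nat.subtype_card _ (by simp [MonoidHom.mem_ker])).symm
    _ = n := by rw [IsCyclic.card_powMonoidHom_ker, Nat.card_eq_fintype_card, Nat.gcd_eq_right hn]

lemma exists_pow_eq_of_pow_orderOf_eq_one [Finite G] {a b : G} (h : b ^ orderOf a = 1) :
    ∃ j, a ^ j = b := by
  have : DecidableEq G := Classical.decEq G
  have : Fintype G := Fintype.ofFinite G
  have himage : (range (orderOf a)).image (a ^ ·) = ({y | y ^ orderOf a = 1} : Finset G) := by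
    refine eq_of_subset_of_card_le (fun y hy => ?_) ?_
    · obtain ⟨j, -, rfl⟩ := mem_image.1 hy
      rw [mem_filter, pow_right_comm, pow_orderOf_eq_one, one_pow]
      exact ⟨mem_univ _, rfl⟩
    · rw [card_pow_eq_one_of_dvd orderOf_dvd_card, card_image_of_injOn, card_range]
      exact coe_range _ ▸ pow_injOn_Iio_orderOf
  obtain ⟨j, -, hj⟩ := mem_image.1 (himage.symm ▸ mem_filter.2 ⟨mem_univ b, h⟩)
  exact ⟨j, hj⟩

lemma exists_pow_orderOf_eq [Finite G] {f : G →* R} {z : G} (hz : f z = 1) :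
    ∃ y, y ^ orderOf f = z := by
  obtain ⟨g, hg⟩ := IsCyclic.exists_monoid_generator (α := G)
  obtain ⟨k, rfl : g ^ k = z⟩ := hg z
  have hf : f ^ k = 1 := by
    ext w
    obtain ⟨j, rfl : g ^ j = w⟩ := hg w
    rw [MonoidHom.pow_apply, ← map_pow, pow_right_comm, map_pow, hz, one_pow, MonoidHom.one_apply]
  obtain ⟨j, rfl⟩ := orderOf_dvd_of_pow_eq_one hf
  exact ⟨g ^ j, by rw [← pow_mul, mul_comm]⟩

variable [Fintype G] [IsDomain R]

lemma card_pow_orderOf_eq [DecidableEq G] (f : G →* R) (z : G) :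
    (#{y | y ^ orderOf f = z} : R) = ∑ l ∈ range (orderOf f), f z ^ l := by
  have hf : f ^ Fintype.card G = 1 := by
    ext w
    rw [MonoidHom.pow_apply, ← map_pow, pow_card_eq_one, map_one, MonoidHom.one_apply]
  by_cases hz : f z = 1
  · have hcard := MonoidHom.card_fiber_eq_of_mem_range
      (powMonoidHom (orderOf f)) (exists_pow_orderOf_eq hz) ⟨1, map_one _⟩
    simp only [powMonoidHom_apply, card_pow_eq_one_of_dvd (orderOf_dvd_of_pow_eq_one hf)] at hcard
    simp [hcard, hz]
  · have hpow : f z ^ orderOf f = 1 := by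
      rw [← MonoidHom.pow_apply, pow_orderOf_eq_one, MonoidHom.one_apply]
    have hempty : #{y : G | y ^ orderOf f = z} = 0 := by
      rw [card_eq_zero, filter_eq_empty_iff]
      rintro y - rfl
      exact hz (by rw [map_pow, ← MonoidHom.pow_apply, pow_orderOf_eq_one, MonoidHom.one_apply])
    rw [hempty, Nat.cast_zero, eq_comm, ← mul_left_inj' (sub_ne_zero.2 hz), geom_sum_mul, hpow,
      sub_self, zero_mul]

theorem sum_geom_mul_eq_sum_pow (f : G →* R) (H : G → R) :
    ∑ z, (∑ l ∈ range (orderOf f), f z ^ l) * H z = ∑ y, H (y ^ orderOf f) := by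
  classical
  refine Eq.trans ?_ (sum_fiberwise univ (fun y : G => y ^ orderOf f) _)
  refine sum_congr rfl fun z _ => ?_
  rw [← card_pow_orderOf_eq, ← nsmul_eq_mul, ← sum_const]
  exact sum_congr rfl fun y hy => by rw [(mem_filter.1 hy).2]

end CyclicGroup

section MulCharGroup

variable {F R : Type*} [Field F] [Finite F] [CommRing R] [IsDomain R]

instance isCyclic_mulChar : IsCyclic (MulChar F R) := by
  obtain ⟨γ, hγ⟩ := IsCyclic.exists_generator (α := Fˣ)
  exact isCyclic_of_injective_ringHom (evalUnit γ) fun _ _ h => (MulChar.eq_iff hγ _ _).2 h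

variable [HasEnoughRootsOfUnity R (Monoid.exponent Fˣ)]

lemma orderOf_evalUnit (ζ : Fˣ) : orderOf (evalUnit ζ : MulChar F R →* R) = orderOf ζ := by
  refine orderOf_eq_orderOf_iff.2 fun k => ⟨fun h => ?_, fun h => ?_⟩
  · by_contra hne
    obtain ⟨χ, hχ⟩ := MulChar.exists_apply_ne_one_of_hasEnoughRootsOfUnity F R
      (a := ((ζ ^ k : Fˣ) : F)) (by simpa [Units.ext_iff] using hne)
    exact hχ (by simpa [evalUnit] using DFunLike.congr_fun h χ)
  · ext χ
    simp [evalUnit, ← map_pow, ← Units.val_pow_eq_pow_val, h]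

end MulCharGroup

section Kummer

open Polynomial

variable {F R : Type*} [Field F] [CommRing R]

lemma prod_sub_nthRootsFinset {A : Type*} [CommRing A] [Algebra F A] {n : ℕ} (hn : 0 < n) {ζ : F}
    (hζ : IsPrimitiveRoot ζ n) (y : A) :
    ∏ c ∈ nthRootsFinset n (1 : F), (y - algebraMap F A c) = y ^ n - 1 := by
  simpa [map_prod] using (congrArg (aeval y) (X_pow_sub_one_eq_prod hn hζ)).symm

/-- The points `0` and `-c`, for `c` an `n`-th root of unity. With `c` in place of `-c`, the
character sums over field polynomials would acquire a sign depending on `n`. -/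
def kummerPoint (n : ℕ) (i : Option (nthRootsFinset n (1 : F))) : F :=
  i.elim 0 fun c => -c

/-- The character `g ↦ D (g 0) * ∏ C (g (-c))` of `F[X]`, the product being over the `n`-th roots
of unity `c`. -/
noncomputable def kummerChar (n : ℕ) (D C : MulChar F R) : F[X] → R :=
  residueChar (kummerPoint n) fun i => i.elim D fun _ => C

lemma kummerPoint_injective (n : ℕ) : Function.Injective (kummerPoint (F := F) n) := by
  have hne {n : ℕ} (c : nthRootsFinset n (1 : F)) : (c : F) ≠ 0 :=
    ne_zero_of_mem_nthRootsFinset one_ne_zero c.2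
  rintro (_ | c) (_ | d) h
  · rfl
  · exact absurd (neg_eq_zero.1 h.symm) (hne d)
  · exact absurd (neg_eq_zero.1 h) (hne c)
  · rw [Subtype.ext (neg_inj.1 h)]

variable {n : ℕ} {ζ : F}

lemma nodal_kummerPoint (hn : 0 < n) (hζ : IsPrimitiveRoot ζ n) :
    Lagrange.nodal univ (kummerPoint (F := F) n) = X ^ (n + 1) - C ((-1) ^ n) * X := by
  have hprod : ∏ c ∈ nthRootsFinset n (1 : F), (X + C c) = X ^ n - (-1) ^ n := by
    calc ∏ c ∈ nthRootsFinset n (1 : F), (X + C c)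
        = ∏ c ∈ nthRootsFinset n (1 : F), -1 * (-X - C c) :=
          prod_congr rfl fun c _ => by ring
      _ = (-1) ^ n * ((-X) ^ n - 1) := by
          rw [prod_mul_distrib, prod_const, hζ.card_nthRootsFinset]
          exact congrArg _ (prod_sub_nthRootsFinset hn hζ (-X))
      _ = X ^ n - (-1) ^ n := by rw [mul_sub, ← mul_pow, neg_one_mul, neg_neg, mul_one]
  rw [Lagrange.nodal, Fintype.prod_option]
  simp only [kummerPoint, Option.elim, C_0, sub_zero, C_neg, sub_neg_eq_add]
  rw [prod_coe_sort (nthRootsFinset n (1 : F)) fun c => X + C c, hprod]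
  simp only [map_pow, map_neg, map_one]
  ring

lemma kummerChar_fieldPoly {K : Type*} [Field K] [Algebra F K] [FiniteDimensional F K]
    (hn : 0 < n) (hζ : IsPrimitiveRoot ζ n) (D C : MulChar F R) (x : K) :
    kummerChar n D C (fieldPoly F x) =
      D (Algebra.norm F (-x)) * C (Algebra.norm F ((-x) ^ n - 1)) := by
  rw [kummerChar, residueChar, Fintype.prod_option, ← prod_sub_nthRootsFinset hn hζ (-x), map_prod,
    map_prod, ← prod_coe_sort (nthRootsFinset n (1 : F))]
  simp [kummerPoint, eval_fieldPoly, sub_eq_add_neg, add_comm]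

lemma prod_option_nthRootsFinset {M : Type*} [CommMonoid M] (hζ : IsPrimitiveRoot ζ n) (a b : M) :
    ∏ i : Option (nthRootsFinset n (1 : F)), i.elim a (fun _ => b) = a * b ^ n := by
  simp [Fintype.prod_option, hζ.card_nthRootsFinset]

lemma eval_derivative_nodal_kummerPoint (hn : 0 < n) (hζ : IsPrimitiveRoot ζ n)
    (i : Option (nthRootsFinset n (1 : F))) :
    (derivative (Lagrange.nodal univ (kummerPoint (F := F) n))).eval (kummerPoint n i) =
      i.elim (-(-1) ^ n) fun _ => (n : F) * (-1) ^ n := by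
  have hroot (c : nthRootsFinset n (1 : F)) : (c : F) ^ n = 1 :=
    (mem_nthRootsFinset hn _).1 c.2
  rw [nodal_kummerPoint hn hζ, derivative_sub, derivative_X_pow, derivative_C_mul_X, eval_sub,
    eval_C]
  rcases i with _ | c
  · simp [kummerPoint, hn.ne']
  · simp [kummerPoint, neg_pow (c : F), hroot, add_mul]

variable [IsDomain R]

theorem coeff_lSeries_kummerChar_mul_gaussSum [Fintype F] (hn : 0 < n) (hζ : IsPrimitiveRoot ζ n)
    {D C : MulChar F R} (hDC : D * C ^ n ≠ 1) (θ : AddChar F R) :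
    PowerSeries.coeff n (lSeries (kummerChar n D C)) * gaussSum (D * C ^ n) θ =
      D (-(-1) ^ n) * C (n * (-1) ^ n) ^ n * (gaussSum D θ * gaussSum C θ ^ n) := by
  have hcard : Fintype.card (Option (nthRootsFinset n (1 : F))) - 1 = n := by
    simp [hζ.card_nthRootsFinset]
  have hcoeff := coeff_pred_card_lSeries_residueChar
    (χ := fun i => i.elim D fun _ => C) (kummerPoint_injective (F := F) n)
  have hgauss := multiJacobiSum_one_mul_gaussSum (ι := Option (nthRootsFinset n (1 : F)))
    (χ := fun i => i.elim D fun _ => C) θ (by rwa [prod_option_nthRootsFinset hζ])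
  rw [prod_option_nthRootsFinset hζ] at hgauss
  rw [hcard] at hcoeff
  rw [kummerChar, hcoeff, mul_assoc, hgauss]
  simp only [eval_derivative_nodal_kummerPoint hn hζ, Fintype.prod_option, Option.elim, prod_const,
    card_univ, Fintype.card_coe, hζ.card_nthRootsFinset]

lemma coeff_lSeries_kummerChar_eq_zero [Finite F] [CharZero R] (hn : 0 < n)
    (hζ : IsPrimitiveRoot ζ n) (D : MulChar F R) {C : MulChar F R} (hC : C ≠ 1) {k : ℕ}
    (hk : n < k) :
    PowerSeries.coeff k (lSeries (kummerChar n D C)) = 0 := by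
  refine coeff_lSeries_residueChar_eq_zero (kummerPoint_injective n)
    (i := some ⟨1, (mem_nthRootsFinset hn _).2 (one_pow n)⟩) hC ?_
  rwa [Fintype.card_option, Fintype.card_coe, hζ.card_nthRootsFinset]

end Kummer

section KummerLogDeriv

open Polynomial

variable {F R : Type*} [Field F] [CommRing R]

section Field

variable (K : Type*) [Field K] [Algebra F K]

/-- The lift of multiplicative characters of `F` to `Kˣ` by composition with the norm of `K/F`. -/
noncomputable def normLift : MulChar F R →* Kˣ →* R where
  toFun χ := χ.toMonoidHom.comp ((Algebra.norm F).comp (Units.coeHom K))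
  map_one' := MonoidHom.ext fun u => MulChar.one_apply_coe (Units.map (Algebra.norm F) u)
  map_mul' χ ψ := MonoidHom.ext fun u => MulChar.mul_apply χ ψ (Algebra.norm F (u : K))

lemma normLift_injective [Finite K] : Function.Injective (normLift (F := F) (R := R) K) := by
  refine fun χ ψ h => MulChar.ext fun a => ?_
  obtain ⟨b, rfl⟩ := FiniteField.unitsMap_norm_surjective F K a
  exact DFunLike.congr_fun h b

variable {K} [Fintype K]

lemma sum_eq_sum_units [DecidableEq K] {f : K → R} (hf : f 0 = 0) : ∑ x, f x = ∑ u : Kˣ, f u := by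
  symm
  refine Fintype.sum_of_injective Units.val Units.val_injective _ _ (fun x hx => ?_) fun _ => rfl
  obtain rfl : x = 0 := by_contra fun h => hx ⟨Units.mk0 x h, rfl⟩
  exact hf

lemma sum_kummerChar_fieldPoly [DecidableEq K] {n : ℕ} {ζ : F} (hn : 0 < n)
    (hζ : IsPrimitiveRoot ζ n) (D C : MulChar F R) :
    ∑ x : K, kummerChar n D C (fieldPoly F x) =
      ∑ u : Kˣ, D (Algebra.norm F (u : K)) * C (Algebra.norm F ((u : K) ^ n - 1)) := by
  rw [← Equiv.sum_comp (Equiv.neg K), sum_eq_sum_units]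
  · simp [kummerChar_fieldPoly hn hζ]
  · simp [kummerChar_fieldPoly hn hζ, MulChar.map_zero]

lemma sum_kummerChar_fieldPoly_eq_sum_twists [IsDomain R] {ζ : F} {χ : MulChar F R}
    (hζ : IsPrimitiveRoot ζ (orderOf χ)) (C : MulChar F R) :
    ∑ x : K, kummerChar (orderOf χ) 1 C (fieldPoly F x) =
      ∑ l ∈ range (orderOf χ), ∑ x : K, kummerChar 1 (χ ^ l) C (fieldPoly F x) := by
  classical
  have : Finite F := Finite.of_injective _ (algebraMap F K).injective
  have hlift (ψ : MulChar F R) (u : Kˣ) : ψ (Algebra.norm F (u : K)) = normLift K ψ u := rfl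
  have hmain := sum_geom_mul_eq_sum_pow (normLift K χ)
    fun z : Kˣ => C (Algebra.norm F ((z : K) - 1))
  rw [orderOf_injective _ (normLift_injective K)] at hmain
  simp only [sum_kummerChar_fieldPoly (orderOf_pos χ) hζ,
    sum_kummerChar_fieldPoly one_pos IsPrimitiveRoot.one,
    hlift _ (_ : Kˣ), map_one, map_pow, MonoidHom.one_apply, MonoidHom.pow_apply, one_mul, pow_one]
  rw [sum_comm]
  simpa only [sum_mul, Units.val_pow_eq_pow_val] using hmain.symm

end Field

variable [Finite F]

theorem lSeriesLogDeriv_kummerChar [IsDomain R] {ζ : F} {χ : MulChar F R}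
    (hζ : IsPrimitiveRoot ζ (orderOf χ)) (C : MulChar F R) :
    lSeriesLogDeriv (kummerChar (orderOf χ) 1 C) =
      ∑ l ∈ range (orderOf χ), lSeriesLogDeriv (kummerChar 1 (χ ^ l) C) := by
  ext k
  rcases k.eq_zero_or_pos with rfl | hk
  · simp [constantCoeff_lSeriesLogDeriv]
  · obtain ⟨p, hp⟩ := CharP.exists F
    have : Fact p.Prime := ⟨CharP.char_is_prime F p⟩
    have : NeZero k := ⟨hk.ne'⟩
    let K := FiniteField.Extension F p k
    have : Fintype K := Fintype.ofFinite K
    have hcoeff (φ : F[X] → R) :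
        PowerSeries.coeff k (lSeriesLogDeriv φ) = ∑ x : K, φ (fieldPoly F x) := by
      rw [← coeff_finrank_lSeriesLogDeriv, FiniteField.finrank_extension]
    rw [map_sum]
    simp only [hcoeff]
    exact sum_kummerChar_fieldPoly_eq_sum_twists hζ C

theorem lSeries_kummerChar [IsDomain R] [CharZero R] {ζ : F} {χ : MulChar F R}
    (hζ : IsPrimitiveRoot ζ (orderOf χ)) (C : MulChar F R) :
    lSeries (kummerChar (orderOf χ) 1 C) =
      ∏ l ∈ range (orderOf χ), lSeries (kummerChar 1 (χ ^ l) C) :=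
  lSeries_eq_prod _ (isMultiplicativeOnMonics_residueChar _ _)
    (fun _ => isMultiplicativeOnMonics_residueChar _ _) (lSeriesLogDeriv_kummerChar hζ C)

end KummerLogDeriv

section HasseDavenportProduct

variable {F : Type*} [Field F] [Fintype F]

lemma gaussSum_ne_zero {θ : AddChar F ℂ} (hθ : θ ≠ 1) (χ : MulChar F ℂ) : gaussSum χ θ ≠ 0 := by
  rcases eq_or_ne χ 1 with rfl | hχ
  · rw [gaussSum_one_left hθ]
    exact neg_ne_zero.2 one_ne_zero
  · exact gaussSum_ne_zero_of_nontrivial (Nat.cast_ne_zero.2 Fintype.card_ne_zero) hχ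
      (AddChar.IsPrimitive.of_ne_one hθ)

/-- The product of the Gauss sums of the twists of `A` by the powers of `χ`. -/
noncomputable def gaussSumProd (θ : AddChar F ℂ) (χ A : MulChar F ℂ) : ℂ :=
  ∏ l ∈ range (orderOf χ), gaussSum (A * χ ^ l) θ

variable {θ : AddChar F ℂ} {χ : MulChar F ℂ} {ζ : F}

lemma gaussSumProd_ne_zero (hθ : θ ≠ 1) (A : MulChar F ℂ) : gaussSumProd θ χ A ≠ 0 :=
  prod_ne_zero_iff.2 fun _ _ => gaussSum_ne_zero hθ _

lemma gaussSumProd_mul_self (A : MulChar F ℂ) :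
    gaussSumProd θ χ (A * χ) = gaussSumProd θ χ A := by
  rcases hn : orderOf χ with _ | k
  · simp [gaussSumProd, hn]
  · simp only [gaussSumProd, hn, mul_assoc, ← pow_succ']
    rw [prod_range_succ, prod_range_succ' (fun l => gaussSum (A * χ ^ l) θ), ← hn,
      pow_orderOf_eq_one, pow_zero]

lemma gaussSumProd_mul_pow (A : MulChar F ℂ) (j : ℕ) :
    gaussSumProd θ χ (A * χ ^ j) = gaussSumProd θ χ A := by
  induction j with
  | zero => rw [pow_zero, mul_one]
  | succ j ih => rw [pow_succ, ← mul_assoc, gaussSumProd_mul_self, ih]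

lemma prod_coeff_one_lSeries_kummerChar {C : MulChar F ℂ} (hC : C ^ orderOf χ ≠ 1) :
    (∏ l ∈ range (orderOf χ), PowerSeries.coeff 1 (lSeries (kummerChar 1 (χ ^ l) C))) *
        gaussSumProd θ χ C =
      C (-1) ^ orderOf χ * (gaussSumProd θ χ 1 * gaussSum C θ ^ orderOf χ) := by
  have hne (l : ℕ) : χ ^ l * C ^ 1 ≠ 1 := by
    contrapose! hC
    have h := congrArg (· ^ orderOf χ) hC
    simpa [mul_pow, pow_right_comm χ l, pow_orderOf_eq_one] using h
  have hcoeff (l : ℕ) : PowerSeries.coeff 1 (lSeries (kummerChar 1 (χ ^ l) C)) *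
      gaussSum (C * χ ^ l) θ = C (-1) * gaussSum (1 * χ ^ l) θ * gaussSum C θ := by
    have h := coeff_lSeries_kummerChar_mul_gaussSum one_pos IsPrimitiveRoot.one (hne l) θ
    simpa [mul_comm, mul_assoc] using h
  rw [gaussSumProd, ← prod_mul_distrib, prod_congr rfl fun l _ => hcoeff l]
  simp [gaussSumProd, prod_mul_distrib, mul_assoc]

theorem product_formula_of_pow_ne_one (hθ : θ ≠ 1) (hζ : IsPrimitiveRoot ζ (orderOf χ))
    {C : MulChar F ℂ} (hC : C ^ orderOf χ ≠ 1) :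
    C (orderOf χ : F) ^ orderOf χ * gaussSumProd θ χ C * gaussSum 1 θ =
      gaussSumProd θ χ 1 * gaussSum (C ^ orderOf χ) θ := by
  have hχ : 0 < orderOf χ := orderOf_pos χ
  have hC1 : C ≠ 1 := by rintro rfl; exact hC (one_pow _)
  have htop := coeff_lSeries_kummerChar_mul_gaussSum (D := 1) hχ hζ (by rwa [one_mul]) θ
  have hunit : IsUnit (-(-1 : F) ^ orderOf χ) := (isUnit_neg_one.pow _).neg
  have hsign : C ((-1) ^ orderOf χ) ^ orderOf χ = C (-1) ^ orderOf χ := by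
    rw [← map_pow, ← map_pow]
    rcases Nat.even_or_odd (orderOf χ) with h | h <;> simp [h.neg_one_pow]
  rw [lSeries_kummerChar hζ] at htop
  have hprod := coeff_card_prod_of_coeff_eq_zero (range (orderOf χ))
    (f := fun l => lSeries (kummerChar 1 (χ ^ l) C)) fun l _ k hk =>
      coeff_lSeries_kummerChar_eq_zero one_pos IsPrimitiveRoot.one (χ ^ l) hC1 hk
  rw [card_range] at hprod
  have hlin := prod_coeff_one_lSeries_kummerChar (θ := θ) hC
  rw [hprod, one_mul, MulChar.one_apply hunit, map_mul, mul_pow, hsign, one_mul] at htop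
  have hcancel : C (-1) ^ orderOf χ * gaussSum C θ ^ orderOf χ ≠ 0 :=
    mul_ne_zero (pow_ne_zero _ (isUnit_neg_one.map C).ne_zero)
      (pow_ne_zero _ (gaussSum_ne_zero hθ C))
  apply mul_right_cancel₀ hcancel
  linear_combination gaussSum (C ^ orderOf χ) θ * hlin - gaussSumProd θ χ C * htop

theorem product_formula (hθ : θ ≠ 1) (hζ : IsPrimitiveRoot ζ (orderOf χ)) (C : MulChar F ℂ) :
    C (orderOf χ : F) ^ orderOf χ * gaussSumProd θ χ C * gaussSum 1 θ =
      gaussSumProd θ χ 1 * gaussSum (C ^ orderOf χ) θ := by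
  by_cases hC : C ^ orderOf χ = 1
  · have : NeZero (orderOf χ) := ⟨(orderOf_pos χ).ne'⟩
    have hunit : IsUnit (orderOf χ : F) := hζ.neZero'.ne.isUnit
    have hfactor : C (orderOf χ : F) ^ orderOf χ = 1 := by
      rw [← MulChar.pow_apply' _ (NeZero.ne _), hC, MulChar.one_apply hunit]
    obtain ⟨j, rfl⟩ := exists_pow_eq_of_pow_orderOf_eq_one hC
    rw [hfactor, hC, one_mul, ← gaussSumProd_mul_pow 1 j, one_mul]
  · exact product_formula_of_pow_ne_one hθ hζ hC

lemma mul_gaussSumProd_div_gaussSumProd (hθ : θ ≠ 1) (hζ : IsPrimitiveRoot ζ (orderOf χ))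
    (A ψ : MulChar F ℂ) :
    ψ (orderOf χ : F) ^ orderOf χ * (gaussSumProd θ χ (A * ψ) / gaussSumProd θ χ A) =
      gaussSum ((A * ψ) ^ orderOf χ) θ / gaussSum (A ^ orderOf χ) θ := by
  have : NeZero (orderOf χ) := ⟨(orderOf_pos χ).ne'⟩
  have hA := product_formula hθ hζ A
  have hAψ := product_formula hθ hζ (A * ψ)
  have hn : A (orderOf χ : F) ^ orderOf χ ≠ 0 :=
    pow_ne_zero _ (hζ.neZero'.ne.isUnit.map A).ne_zero
  rw [MulChar.mul_apply, mul_pow] at hAψ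
  rw [← mul_div_assoc, div_eq_div_iff (gaussSumProd_ne_zero hθ A) (gaussSum_ne_zero hθ _)]
  apply mul_right_cancel₀ (mul_ne_zero (mul_ne_zero hn (gaussSum_ne_zero hθ 1))
    (gaussSumProd_ne_zero (χ := χ) hθ 1))
  linear_combination (gaussSumProd θ χ 1 * gaussSum (A ^ orderOf χ) θ) * hAψ -
    (gaussSumProd θ χ 1 * gaussSum ((A * ψ) ^ orderOf χ) θ) * hA

theorem prod_gaussSum_div_mul_gaussSum_inv_div (hθ : θ ≠ 1)
    (hζ : IsPrimitiveRoot ζ (orderOf χ)) (A B ψ : MulChar F ℂ) :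
    ∏ l ∈ range (orderOf χ), (gaussSum (A * χ ^ l * ψ) θ / gaussSum (A * χ ^ l) θ) *
        (gaussSum ((B * χ ^ l * ψ)⁻¹) θ / gaussSum ((B * χ ^ l)⁻¹) θ) =
      (gaussSum (A ^ orderOf χ * ψ ^ orderOf χ) θ / gaussSum (A ^ orderOf χ) θ) *
        (gaussSum ((B ^ orderOf χ * ψ ^ orderOf χ)⁻¹) θ / gaussSum ((B ^ orderOf χ)⁻¹) θ) := by
  have : NeZero (orderOf χ) := ⟨(orderOf_pos χ).ne'⟩
  have hψ : ψ (orderOf χ : F) ^ orderOf χ * ψ⁻¹ (orderOf χ : F) ^ orderOf χ = 1 := by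
    rw [← mul_pow, ← MulChar.mul_apply, mul_inv_cancel, MulChar.one_apply hζ.neZero'.ne.isUnit,
      one_pow]
  have hA := mul_gaussSumProd_div_gaussSumProd hθ hζ A ψ
  have hB := mul_gaussSumProd_div_gaussSumProd (χ := χ⁻¹) hθ (by rwa [orderOf_inv]) B⁻¹ ψ⁻¹
  rw [orderOf_inv] at hB
  calc
    _ = (gaussSumProd θ χ (A * ψ) / gaussSumProd θ χ A) *
        (gaussSumProd θ χ⁻¹ (B⁻¹ * ψ⁻¹) / gaussSumProd θ χ⁻¹ B⁻¹) := by
      simp only [gaussSumProd, orderOf_inv, prod_mul_distrib, prod_div_distrib, mul_inv, inv_pow,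
        mul_right_comm _ ψ, mul_right_comm _ ψ⁻¹]
    _ = _ := by
      rw [← mul_pow, ← mul_pow, ← inv_pow, ← inv_pow, mul_inv, ← hA, ← hB, mul_mul_mul_comm, hψ,
        one_mul]

end HasseDavenportProduct

end HasseDavenport

theorem stmt1 {F : Type} [Field F] [Fintype F]
    (θ : AddChar F ℂ) (hθ : θ ≠ 1)
    (n m : ℕ) (hn : 0 < n) (hm : 0 < m) (hq : Fintype.card F ≡ 1 [MOD n])
    (ζ : Fˣ) (hζ : orderOf ζ = n)
    (χn : MulChar F ℂ) (hχn : orderOf χn = n)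
    (A B : Fin m → MulChar F ℂ) (lam : F) :
    ∑ l ∈ Finset.range n,
        ffHyp θ (fun i => A i ^ n) (fun i => B i ^ n) ((ζ : F) ^ l * lam)
      = ffHyp θ (fun p : Fin m × Fin n => A p.1 * χn ^ (p.2 : ℕ))
          (fun p : Fin m × Fin n => B p.1 * χn ^ (p.2 : ℕ)) (lam ^ n) := by
  let : Fintype (MulChar F ℂ) := Fintype.ofFinite _
  subst hχn
  have hζ' : IsPrimitiveRoot (ζ : F) (orderOf χn) :=
    IsPrimitiveRoot.coe_units_iff.2 (hζ ▸ IsPrimitiveRoot.orderOf ζ)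
  have hpow (ψ : MulChar F ℂ) (a : F) : (ψ ^ orderOf χn) a = ψ (a ^ orderOf χn) := by
    rw [MulChar.pow_apply' _ hn.ne', map_pow]
  have hfibre := HasseDavenport.sum_geom_mul_eq_sum_pow
    (HasseDavenport.evalUnit ζ : MulChar F ℂ →* ℂ) fun χ =>
    (∏ i, (gaussSum (A i ^ orderOf χn * χ) θ / gaussSum (A i ^ orderOf χn) θ) *
        (gaussSum ((B i ^ orderOf χn * χ)⁻¹) θ / gaussSum ((B i ^ orderOf χn)⁻¹) θ)) *
      χ (-1) ^ Fintype.card (Fin m) * χ lam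
  rw [HasseDavenport.orderOf_evalUnit, hζ] at hfibre
  simp only [ffHyp]
  rw [← Finset.mul_sum, Finset.sum_comm]
  congr 1
  refine Eq.trans ?_ (hfibre.trans ?_)
  · simp only [HasseDavenport.evalUnit_apply, map_mul, map_pow, Finset.sum_mul]
    exact Finset.sum_congr rfl fun χ _ => Finset.sum_congr rfl fun l _ => by ring
  · simp only [Fintype.prod_prod_type, Fintype.card_prod, Fintype.card_fin, hpow, map_pow,
      pow_mul', ← HasseDavenport.prod_gaussSum_div_mul_gaussSum_inv_div hθ hζ', Finset.prod_range]
end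

section
/- Let q be an odd prime power and let A and B be multiplicative characters of F_q^* with A^2 ≠ ε and B^4 ≠ ε. Then _4F_4(A, φA, B, φB; ε, φ, AB̄, φAB̄ | 1)_q = g(B^2) g(Ā^2 B^4) / ( g(Ā^2 B^2) g(B^4) ) + Σ_{R} g(Ā^2) g(R̄ B^2) / ( g(R̄) g(Ā^2 B^2) ), where the sum is over the multiplicative characters R of F_q^* with R^2 = A^2. -/
/-!
By the Hasse-Davenport formula, the Gauss sums at `χ` and `φ * χ` multiply to the Gauss sum at
`χ ^ 2`, up to the factor `χ⁻¹ 4 * g(φ)`. Applied to the four pairs of parameters, where these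
factors cancel, it turns the hypergeometric sum into a sum over `χ` of four Gauss sums that depend
on `χ` only through `χ ^ 2`, and pairing these up gives
`J(A² χ², B⁻²) * J(χ⁻², B⁻²)` up to a constant. Expand both Jacobi sums, over `t` and `r`: since
`∑ χ, χ ^ 2 (t / r)` vanishes unless `r = ±t`, only two sums over `t` survive. The one with `r = t`
is `J(A², B⁻⁴)`, the first term of the evaluation. The one with `r = -t` is
`∑ t, A² t * B⁻² (1 - t ^ 2)`, and substituting `s = t ^ 2` splits it into the Jacobi sums
`J(R, B⁻²)` over the square roots `R` of `A²`, which are converted back to Gauss sums.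
-/

theorem sq_eq_one_iff_eq_one_or_eq_of_orderOf_eq_two {G : Type*} [Group G] [Finite G] [IsCyclic G]
    {g : G} (hg : orderOf g = 2) {x : G} : x ^ 2 = 1 ↔ x = 1 ∨ x = g := by
  classical
  have := Fintype.ofFinite G
  have hg_sq : g ^ 2 = 1 := hg ▸ pow_orderOf_eq_one g
  have hg_ne : g ≠ 1 := by
    rintro rfl
    simp at hg
  have hroots : {1, g} = ({x | x ^ 2 = 1} : Finset G) := by
    refine Finset.eq_of_subset_of_card_le ?_ ?_
    · simp [Finset.insert_subset_iff, hg_sq]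
    · simpa [Finset.card_pair hg_ne.symm] using IsCyclic.card_pow_eq_one_le (α := G) two_pos
  simpa using (Finset.ext_iff.mp hroots x).symm

theorem mulChar_sq_apply_neg_one {F R : Type*} [CommRing F] [CommRing R] (χ : MulChar F R) :
    (χ ^ 2) (-1) = 1 := by
  rw [MulChar.pow_apply' χ two_ne_zero, ← map_pow, neg_one_sq, map_one]

section MulChar

variable {F R : Type*} [Field F] [Finite F] [CommRing R] {φ : MulChar F R}

theorem ringChar_ne_two_of_orderOf_mulChar_eq_two (hφ : orderOf φ = 2) : ringChar F ≠ 2 := by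
  intro hF
  have := Fintype.ofFinite F
  have hdvd : 2 ∣ Fintype.card F - 1 := hφ ▸ MulChar.orderOf_dvd_card_sub_one F φ
  have heven := FiniteField.even_card_of_char_two hF
  have hpos : 0 < Fintype.card F := Fintype.card_pos
  lia

variable [IsDomain R]

theorem isCyclic_mulChar : IsCyclic (MulChar F R) := by
  classical
  have := Fintype.ofFinite F
  exact (MulChar.equiv_rootsOfUnity F R).isCyclic.mpr inferInstance

theorem sum_mulChar_filter_sq_eq_sq [Fintype (MulChar F R)] [DecidableEq (MulChar F R)]
    {M : Type*} [AddCommMonoid M] (hφ : orderOf φ = 2) (A : MulChar F R) (f : MulChar F R → M) :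
    ∑ χ with χ ^ 2 = A ^ 2, f χ = f A + f (φ * A) := by
  have := isCyclic_mulChar (F := F) (R := R)
  have hne : A ≠ φ * A := by
    intro h
    rw [right_eq_mul.mp h] at hφ
    simp at hφ
  have hroots : ({χ | χ ^ 2 = A ^ 2} : Finset (MulChar F R)) = {A, φ * A} := by
    ext χ
    rw [Finset.mem_filter_univ, Finset.mem_insert, Finset.mem_singleton, ← div_eq_one, ← div_pow,
      sq_eq_one_iff_eq_one_or_eq_of_orderOf_eq_two hφ, div_eq_one, div_eq_iff_eq_mul]
  rw [hroots, Finset.sum_pair hne]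

end MulChar

section QuadraticChar

variable {F R : Type*} [Field F] [Fintype F] [CommRing R] [IsDomain R] {φ : MulChar F R}

theorem eq_ringHomComp_quadraticChar_of_orderOf_eq_two [DecidableEq F] (hφ : orderOf φ = 2) :
    φ = (quadraticChar F).ringHomComp (Int.castRingHom R) := by
  have := isCyclic_mulChar (F := F) (R := R)
  have hφ_sq : φ ^ 2 = 1 := hφ ▸ pow_orderOf_eq_one φ
  have hφ_ne : φ ≠ 1 := by
    rintro rfl
    simp at hφ
  have neg_one_ne_one : (-1 : R) ≠ 1 := by
    obtain ⟨a, ha⟩ := MulChar.ne_one_iff.mp hφ_ne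
    rcases MulChar.isQuadratic_iff_sq_eq_one.mpr hφ_sq a with h | h | h
    · exact absurd h (a.isUnit.map φ).ne_zero
    · exact absurd h ha
    · rwa [← h]
  have hquad_sq : (quadraticChar F).ringHomComp (Int.castRingHom R) ^ 2 = 1 :=
    ((quadraticChar_isQuadratic F).comp _).sq_eq_one
  refine (((sq_eq_one_iff_eq_one_or_eq_of_orderOf_eq_two hφ).mp hquad_sq).resolve_left ?_).symm
  obtain ⟨a, ha⟩ := quadraticChar_exists_neg_one' (ringChar_ne_two_of_orderOf_mulChar_eq_two hφ)
  refine MulChar.ne_one_iff.mpr ⟨a, ?_⟩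
  simpa [ha] using neg_one_ne_one

theorem sum_comp_sq (hφ : orderOf φ = 2) (f : F → R) :
    ∑ t, f (t ^ 2) = ∑ s, (1 + φ s) * f s := by
  classical
  rw [← Finset.sum_fiberwise Finset.univ (fun t : F ↦ t ^ 2)]
  refine Finset.sum_congr rfl fun s _ ↦ ?_
  have hcard : (({t | t ^ 2 = s} : Finset F).card : R) = 1 + φ s := by
    have h := quadraticChar_card_sqrts (ringChar_ne_two_of_orderOf_mulChar_eq_two hφ) s
    rw [Set.toFinset_ofPred] at h
    rw [eq_ringHomComp_quadraticChar_of_orderOf_eq_two hφ]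
    simpa [add_comm] using congrArg (Int.cast : ℤ → R) h
  calc ∑ t with t ^ 2 = s, f (t ^ 2)
    _ = ∑ t : F with t ^ 2 = s, f s := Finset.sum_congr rfl fun t ht ↦ by
      rw [(Finset.mem_filter.mp ht).2]
    _ = (1 + φ s) * f s := by rw [Finset.sum_const, nsmul_eq_mul, hcard]

end QuadraticChar

section Orthogonality

variable {F R : Type*} [Field F] [Fintype F] [CommRing R] [IsDomain R] [Fintype (MulChar F R)]
  [HasEnoughRootsOfUnity R (Monoid.exponent Fˣ)]

theorem sum_mulChar_apply [DecidableEq F] (a : F) :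
    ∑ χ : MulChar F R, χ a = if a = 1 then (Fintype.card F : R) - 1 else 0 := by
  split_ifs with ha
  · have hcard : Fintype.card (MulChar F R) + 1 = Fintype.card F := by
      rw [Fintype.card_eq_card_units_add_one (α := F), ← Nat.card_eq_fintype_card (α := Fˣ),
        ← MulChar.card_eq_card_units_of_hasEnoughRootsOfUnity F R, Nat.card_eq_fintype_card]
    simp [ha, ← hcard]
  · obtain ⟨χ, hχ⟩ := MulChar.exists_apply_ne_one_of_hasEnoughRootsOfUnity F R ha
    refine eq_zero_of_mul_eq_self_left hχ ?_
    simp only [Finset.mul_sum, ← MulChar.mul_apply]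
    exact Equiv.sum_comp (Equiv.mulLeft χ) fun ψ ↦ ψ a

theorem sum_mul_sum_mulChar_sq (hF : ringChar F ≠ 2) {t : F} (ht : t ≠ 0) (f : F → R) :
    ∑ r, f r * ∑ χ : MulChar F R, (χ ^ 2) t * (χ ^ 2)⁻¹ r =
      ((Fintype.card F : R) - 1) * (f t + f (-t)) := by
  classical
  have hne : t ≠ -t := fun h ↦ ht ((Ring.eq_self_iff_eq_zero_of_char_ne_two hF).mp h.symm)
  have hchar (r : F) (χ : MulChar F R) : (χ ^ 2) t * (χ ^ 2)⁻¹ r = χ ((t / r) ^ 2) := by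
    rw [MulChar.inv_apply', ← map_mul, ← div_eq_mul_inv, MulChar.pow_apply' χ two_ne_zero, map_pow]
  have hsq (r : F) : (t / r) ^ 2 = 1 ↔ r ∈ ({t, -t} : Finset F) := by
    rcases eq_or_ne r 0 with rfl | hr
    · simp [ht, ht.symm]
    · rw [div_pow, div_eq_one_iff_eq (pow_ne_zero 2 hr), eq_comm, sq_eq_sq_iff_eq_or_eq_neg,
        Finset.mem_insert, Finset.mem_singleton]
  simp only [hchar, sum_mulChar_apply, hsq, mul_ite, mul_zero]
  rw [Finset.sum_ite_mem, Finset.univ_inter, Finset.sum_pair hne]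
  ring

end Orthogonality

section JacobiSum

variable {F R : Type*} [Field F] [Fintype F] [CommRing R]

theorem jacobiSum_inv_mul_right (χ ψ : MulChar F R) :
    jacobiSum χ (χ⁻¹ * ψ) = χ (-1) * jacobiSum χ ψ⁻¹ := by
  classical
  -- `u ↦ u / (u - 1)` is an involution of `F \ {1}` with `1 - u / (u - 1) = (1 - u)⁻¹`.
  have hsub {u : F} (hu : u ≠ 1) : u - 1 ≠ 0 := sub_ne_zero.mpr hu
  have hmaps : ∀ u ∈ ({1}ᶜ : Finset F), u / (u - 1) ∈ ({1}ᶜ : Finset F) := by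
    intro u hu
    rw [Finset.mem_compl, Finset.mem_singleton] at hu ⊢
    rw [div_eq_one_iff_eq (hsub hu)]
    exact fun h ↦ one_ne_zero (α := F) (by linear_combination h)
  have hinvol : ∀ u ∈ ({1}ᶜ : Finset F), u / (u - 1) / (u / (u - 1) - 1) = u := by
    intro u hu
    have := hsub (by simpa using hu)
    simp [field]
  have hdrop (α β : MulChar F R) : jacobiSum α β = ∑ u ∈ {1}ᶜ, α u * β (1 - u) := by
    rw [jacobiSum, Fintype.sum_eq_add_sum_compl 1]
    simp [MulChar.map_zero]
  rw [hdrop, hdrop, Finset.mul_sum]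
  refine Finset.sum_nbij' _ _ hmaps hmaps hinvol hinvol fun u hu ↦ ?_
  have hu' := hsub (by simpa using hu)
  have hneg : -1 * (u / (u - 1)) = u * (1 - u)⁻¹ := by
    rw [← neg_sub u 1, inv_neg, div_eq_mul_inv]
    ring
  have hone_sub : 1 - u / (u - 1) = (1 - u)⁻¹ := by
    rw [← neg_sub u 1, inv_neg]
    field
  rw [hone_sub, MulChar.inv_apply' ψ, inv_inv, ← mul_assoc, ← map_mul χ, hneg, map_mul χ,
    MulChar.mul_apply, MulChar.inv_apply', mul_assoc]

variable [IsDomain R]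

theorem sum_sq_mul_apply_one_sub_sq [Fintype (MulChar F R)] [DecidableEq (MulChar F R)]
    {φ : MulChar F R} (hφ : orderOf φ = 2) (A χ : MulChar F R) :
    ∑ t, (A ^ 2) t * χ (1 - t ^ 2) = ∑ ψ with ψ ^ 2 = A ^ 2, jacobiSum ψ χ := by
  rw [sum_mulChar_filter_sq_eq_sq hφ, jacobiSum, jacobiSum, ← Finset.sum_add_distrib]
  simp only [MulChar.pow_apply' A two_ne_zero, ← map_pow]
  rw [sum_comp_sq hφ fun s ↦ A s * χ (1 - s)]
  refine Finset.sum_congr rfl fun s _ ↦ ?_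
  rw [MulChar.mul_apply]
  ring

theorem sum_jacobiSum_sq_mul_jacobiSum_sq_inv [Fintype (MulChar F R)]
    [HasEnoughRootsOfUnity R (Monoid.exponent Fˣ)] (hF : ringChar F ≠ 2) (α β γ : MulChar F R) :
    ∑ χ : MulChar F R, jacobiSum (α * χ ^ 2) β * jacobiSum (χ ^ 2)⁻¹ γ =
      ((Fintype.card F : R) - 1) * ∑ t, α t * β (1 - t) * (γ (1 - t) + γ (1 + t)) := by
  have hexpand (χ : MulChar F R) : jacobiSum (α * χ ^ 2) β * jacobiSum (χ ^ 2)⁻¹ γ =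
      ∑ t, α t * β (1 - t) * ∑ r, γ (1 - r) * ((χ ^ 2) t * (χ ^ 2)⁻¹ r) := by
    rw [jacobiSum, jacobiSum, Finset.sum_mul_sum]
    refine Finset.sum_congr rfl fun t _ ↦ ?_
    rw [Finset.mul_sum]
    refine Finset.sum_congr rfl fun r _ ↦ ?_
    rw [MulChar.mul_apply]
    ring
  simp only [hexpand]
  rw [Finset.sum_comm, Finset.mul_sum]
  refine Finset.sum_congr rfl fun t _ ↦ ?_
  rcases eq_or_ne t 0 with rfl | ht
  · simp [MulChar.map_zero]
  rw [← Finset.mul_sum, Finset.sum_comm]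
  simp only [← Finset.mul_sum]
  rw [sum_mul_sum_mulChar_sq hF ht fun r ↦ γ (1 - r), sub_neg_eq_add]
  ring

theorem sum_jacobiSum_mul_jacobiSum_eq_add_sum_sqrt [Fintype (MulChar F R)]
    [DecidableEq (MulChar F R)] [HasEnoughRootsOfUnity R (Monoid.exponent Fˣ)] {φ : MulChar F R}
    (hφ : orderOf φ = 2) (A β : MulChar F R) :
    ∑ χ : MulChar F R, jacobiSum (A ^ 2 * χ ^ 2) β * jacobiSum (χ ^ 2)⁻¹ β =
      ((Fintype.card F : R) - 1) *
        (jacobiSum (A ^ 2) (β ^ 2) + ∑ ψ with ψ ^ 2 = A ^ 2, jacobiSum ψ β) := by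
  rw [sum_jacobiSum_sq_mul_jacobiSum_sq_inv (ringChar_ne_two_of_orderOf_mulChar_eq_two hφ),
    ← sum_sq_mul_apply_one_sub_sq hφ, jacobiSum, ← Finset.sum_add_distrib]
  congr 1
  refine Finset.sum_congr rfl fun t _ ↦ ?_
  rw [show 1 - t ^ 2 = (1 - t) * (1 + t) by ring, map_mul, MulChar.pow_apply' β two_ne_zero]
  ring

theorem apply_four_mul_jacobiSum_self {φ χ : MulChar F R} (hφ : orderOf φ = 2) (hχ : χ ≠ 1) :
    χ 4 * jacobiSum χ χ = jacobiSum φ χ := by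
  have h2 : (2 : F) ≠ 0 := Ring.two_ne_zero (ringChar_ne_two_of_orderOf_mulChar_eq_two hφ)
  -- The substitution `u = 2 * x - 1` turns `4 * x * (1 - x)` into `1 - u ^ 2`.
  have hsubst : χ 4 * jacobiSum χ χ = ∑ u, χ (1 - u ^ 2) := by
    rw [jacobiSum, Finset.mul_sum,
      ← ((Equiv.mulLeft₀ (2 : F) h2).trans (Equiv.subRight 1)).sum_comp fun u ↦ χ (1 - u ^ 2)]
    refine Finset.sum_congr rfl fun x _ ↦ ?_
    rw [← map_mul, ← map_mul]
    congr 1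
    simp only [Equiv.trans_apply, Equiv.mulLeft₀_apply, Equiv.subRight_apply]
    ring
  have hzero : ∑ s : F, χ (1 - s) = 0 :=
    ((Equiv.subLeft 1).sum_comp χ).trans (MulChar.sum_eq_zero_of_ne_one hχ)
  rw [hsubst, sum_comp_sq hφ fun s ↦ χ (1 - s)]
  simp only [add_mul, one_mul, Finset.sum_add_distrib, hzero, zero_add, jacobiSum]

end JacobiSum

section GaussSum

variable {F R : Type*} [Field F] [Fintype F] [CommRing R] [IsDomain R] {θ : AddChar F R}

theorem natCast_card_ne_zero_of_addChar_ne_one (hθ : θ ≠ 1) : (Fintype.card F : R) ≠ 0 := by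
  obtain ⟨x, hx⟩ := AddChar.ne_one_iff.mp hθ
  obtain ⟨n, hp, hcard⟩ := FiniteField.card F (ringChar F)
  intro hzero
  rw [hcard, Nat.cast_pow, pow_eq_zero_iff n.ne_zero] at hzero
  have := Fact.mk hp
  have : CharP R (ringChar F) := CharP.ringChar_of_prime_eq_zero hp hzero ▸ ringChar.charP R
  refine hx (frobenius_inj R (ringChar F) ?_)
  rw [map_one, frobenius_def, ← AddChar.map_nsmul_eq_pow, nsmul_eq_mul, CharP.cast_eq_zero,
    zero_mul, AddChar.map_zero_eq_one]

theorem gaussSum_ne_zero (hθ : θ ≠ 1) (χ : MulChar F R) : gaussSum χ θ ≠ 0 := by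
  rcases eq_or_ne χ 1 with rfl | hχ
  · simp [gaussSum_one_left hθ]
  · exact gaussSum_ne_zero_of_nontrivial (natCast_card_ne_zero_of_addChar_ne_one hθ) hχ
      (AddChar.IsPrimitive.of_ne_one hθ)

theorem gaussSum_mul_gaussSum_inv (hθ : θ ≠ 1) {χ : MulChar F R} (hχ : χ ≠ 1) :
    gaussSum χ θ * gaussSum χ⁻¹ θ = χ (-1) * Fintype.card F := by
  have hneg : χ⁻¹ (-1) = χ (-1) := by rw [MulChar.inv_apply', inv_neg_one]
  rw [← mul_gaussSum_inv_eq_gaussSum χ⁻¹ θ, hneg, mul_left_comm,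
    gaussSum_mul_gaussSum_eq_card hχ (AddChar.IsPrimitive.of_ne_one hθ)]

theorem apply_neg_one_mul_gaussSum_mul_gaussSum_inv_of_sq_eq_sq (hθ : θ ≠ 1) {χ ψ : MulChar F R}
    (hχ : χ ^ 2 ≠ 1) (hψ : ψ ^ 2 = χ ^ 2) :
    ψ (-1) * (gaussSum ψ θ * gaussSum ψ⁻¹ θ) = gaussSum (χ ^ 2) θ * gaussSum (χ ^ 2)⁻¹ θ := by
  have hψ_ne : ψ ≠ 1 := by
    rintro rfl
    exact hχ (hψ ▸ one_pow 2)
  rw [gaussSum_mul_gaussSum_inv hθ hψ_ne, gaussSum_mul_gaussSum_inv hθ hχ, ← mul_assoc, ← sq,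
    ← MulChar.pow_apply' ψ two_ne_zero, hψ]

theorem gaussSum_mul_gaussSum_inv_mul {ψ : MulChar F R} (hψ : ψ ≠ 1) (θ : AddChar F R)
    (χ : MulChar F R) :
    gaussSum χ θ * gaussSum (χ⁻¹ * ψ) θ = χ (-1) * (gaussSum ψ θ * jacobiSum χ ψ⁻¹) := by
  have h := jacobiSum_mul_nontrivial (χ := χ) (φ := χ⁻¹ * ψ) (by rwa [mul_inv_cancel_left]) θ
  rw [mul_inv_cancel_left, jacobiSum_inv_mul_right] at h
  rw [← h, mul_left_comm]

-- The Hasse-Davenport product formula for the quadratic character.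
theorem apply_four_mul_gaussSum_mul_gaussSum (hθ : θ ≠ 1) {φ : MulChar F R} (hφ : orderOf φ = 2)
    (χ : MulChar F R) :
    χ 4 * (gaussSum χ θ * gaussSum (φ * χ) θ) = gaussSum φ θ * gaussSum (χ ^ 2) θ := by
  have := isCyclic_mulChar (F := F) (R := R)
  have hφ_sq : φ ^ 2 = 1 := hφ ▸ pow_orderOf_eq_one φ
  have h2 : (2 : F) ≠ 0 := Ring.two_ne_zero (ringChar_ne_two_of_orderOf_mulChar_eq_two hφ)
  by_cases hχ_sq : χ ^ 2 = 1
  · have h4 : χ 4 = 1 := by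
      rw [show (4 : F) = 2 ^ 2 by norm_num, map_pow, ← MulChar.pow_apply' χ two_ne_zero, hχ_sq,
        MulChar.one_apply h2.isUnit]
    rw [h4, hχ_sq]
    rcases (sq_eq_one_iff_eq_one_or_eq_of_orderOf_eq_two hφ).mp hχ_sq with rfl | rfl
    · rw [one_mul, mul_one, mul_comm]
    · rw [one_mul, ← sq χ, hφ_sq]
  · have hχ : χ ≠ 1 := by
      rintro rfl
      exact hχ_sq (one_pow 2)
    have hφχ : φ * χ ≠ 1 := by
      intro h
      apply hχ_sq
      rw [eq_inv_of_mul_eq_one_right h, inv_pow, hφ_sq, inv_one]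
    have hself : gaussSum (χ ^ 2) θ * jacobiSum χ χ = gaussSum χ θ * gaussSum χ θ := by
      rw [sq, jacobiSum_mul_nontrivial (by rwa [← sq])]
    have htwist : gaussSum (φ * χ) θ * (χ 4 * jacobiSum χ χ) = gaussSum φ θ * gaussSum χ θ := by
      rw [apply_four_mul_jacobiSum_self hφ hχ, jacobiSum_mul_nontrivial hφχ]
    apply mul_left_cancel₀ (gaussSum_ne_zero hθ χ)
    linear_combination gaussSum (χ ^ 2) θ * htwist - χ 4 * gaussSum (φ * χ) θ * hself

end GaussSum

section Pochhammer

variable {F K : Type*} [Field F] [Fintype F] [Field K]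

/-- The finite field analogue `(A)_χ = g(Aχ) / g(A)` of the Pochhammer symbol
`(a)ₙ = Γ(a + n) / Γ(a)`, with respect to the additive character `θ` defining the Gauss sums. -/
noncomputable def gaussPochhammer (θ : AddChar F K) (A χ : MulChar F K) : K :=
  gaussSum (A * χ) θ / gaussSum A θ

variable {θ : AddChar F K} {φ : MulChar F K}

theorem gaussPochhammer_duplication (hθ : θ ≠ 1) (hφ : orderOf φ = 2) (A χ : MulChar F K) :
    χ 4 * (gaussPochhammer θ A χ * gaussPochhammer θ (φ * A) χ) =
      gaussPochhammer θ (A ^ 2) (χ ^ 2) := by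
  have hshift := apply_four_mul_gaussSum_mul_gaussSum hθ hφ (A * χ)
  have hbase := apply_four_mul_gaussSum_mul_gaussSum hθ hφ A
  rw [MulChar.mul_apply, mul_pow, ← mul_assoc φ] at hshift
  have hA := gaussSum_ne_zero hθ A
  have hφA := gaussSum_ne_zero hθ (φ * A)
  have hA_sq := gaussSum_ne_zero hθ (A ^ 2)
  have h := gaussSum_ne_zero hθ φ
  have hA4 : A 4 ≠ 0 := left_ne_zero_of_mul (hbase ▸ mul_ne_zero h hA_sq)
  unfold gaussPochhammer
  rw [div_mul_div_comm, mul_div_assoc', div_eq_div_iff (mul_ne_zero hA hφA) hA_sq]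
  apply mul_left_cancel₀ (mul_ne_zero h hA4)
  linear_combination gaussSum φ θ * gaussSum (A ^ 2) θ * hshift -
    gaussSum φ θ * gaussSum (A ^ 2 * χ ^ 2) θ * hbase

theorem gaussPochhammer_mul_gaussPochhammer_inv_duplication (hθ : θ ≠ 1) (hφ : orderOf φ = 2)
    (A C χ : MulChar F K) :
    gaussPochhammer θ A χ * gaussPochhammer θ C⁻¹ χ⁻¹ *
        (gaussPochhammer θ (φ * A) χ * gaussPochhammer θ (φ * C)⁻¹ χ⁻¹) =
      gaussPochhammer θ (A ^ 2) (χ ^ 2) * gaussPochhammer θ (C⁻¹ ^ 2) (χ ^ 2)⁻¹ := by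
  have hφ_inv : φ⁻¹ = φ := inv_eq_of_mul_eq_one_left (by rw [← sq, ← hφ, pow_orderOf_eq_one])
  have h2 : (2 : F) ≠ 0 := Ring.two_ne_zero (ringChar_ne_two_of_orderOf_mulChar_eq_two hφ)
  have h4 : χ 4 * χ⁻¹ 4 = 1 := by
    rw [← MulChar.mul_apply, mul_inv_cancel, show (4 : F) = 2 ^ 2 by norm_num,
      MulChar.one_apply (h2.isUnit.pow 2)]
  rw [← gaussPochhammer_duplication hθ hφ A, ← inv_pow χ,
    ← gaussPochhammer_duplication hθ hφ C⁻¹, mul_mul_mul_comm (χ 4), h4, one_mul, mul_inv, hφ_inv,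
    mul_mul_mul_comm]

end Pochhammer

section Evaluation

variable {F K : Type*} [Field F] [Fintype F] [Field K] {θ : AddChar F K}

theorem gaussPochhammer_mul_eq_jacobiSum_mul_jacobiSum (hθ : θ ≠ 1) (α χ : MulChar F K)
    {β : MulChar F K} (hβ : β ≠ 1) :
    gaussPochhammer θ α χ * gaussPochhammer θ 1 χ⁻¹ *
        (gaussPochhammer θ β χ * gaussPochhammer θ (α⁻¹ * β) χ⁻¹) =
      -α (-1) * gaussSum β θ / (gaussSum α θ * gaussSum (α⁻¹ * β) θ) *
        (jacobiSum (α * χ) β⁻¹ * jacobiSum χ⁻¹ β⁻¹) := by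
  have hleft := gaussSum_mul_gaussSum_inv_mul hβ θ (α * χ)
  have hright := gaussSum_mul_gaussSum_inv_mul hβ θ χ⁻¹
  have hsign : χ (-1) * χ⁻¹ (-1) = 1 := by
    rw [← MulChar.mul_apply, mul_inv_cancel, MulChar.one_apply isUnit_one.neg]
  rw [mul_inv, mul_right_comm, MulChar.mul_apply] at hleft
  rw [inv_inv, mul_comm χ] at hright
  have hα := gaussSum_ne_zero hθ α
  have hβ_ne := gaussSum_ne_zero hθ β
  have hαβ := gaussSum_ne_zero hθ (α⁻¹ * β)
  simp only [gaussPochhammer, gaussSum_one_left hθ, one_mul]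
  field_simp
  linear_combination -gaussSum χ⁻¹ θ * gaussSum (β * χ) θ * hleft -
    α (-1) * χ (-1) * gaussSum β θ * jacobiSum (α * χ) β⁻¹ * hright -
    α (-1) * gaussSum β θ ^ 2 * jacobiSum (α * χ) β⁻¹ * jacobiSum χ⁻¹ β⁻¹ * hsign

theorem gaussSum_mul_jacobiSum_div_eq_of_sq_eq_sq (hθ : θ ≠ 1) {A β ψ : MulChar F K}
    (hA : A ^ 2 ≠ 1) (hβ : β ≠ 1) (hψ : ψ ^ 2 = A ^ 2) :
    gaussSum β θ * jacobiSum ψ β⁻¹ / gaussSum (A ^ 2) θ =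
      gaussSum (A⁻¹ ^ 2) θ * gaussSum (ψ⁻¹ * β) θ / gaussSum ψ⁻¹ θ := by
  have hreflect := apply_neg_one_mul_gaussSum_mul_gaussSum_inv_of_sq_eq_sq hθ hA hψ
  have hjacobi := gaussSum_mul_gaussSum_inv_mul hβ θ ψ
  have hsign : ψ (-1) * ψ (-1) = 1 := by
    rw [← MulChar.mul_apply, ← sq, mulChar_sq_apply_neg_one]
  rw [inv_pow, div_eq_div_iff (gaussSum_ne_zero hθ _) (gaussSum_ne_zero hθ _)]
  linear_combination gaussSum (ψ⁻¹ * β) θ * hreflect -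
    ψ (-1) * gaussSum ψ⁻¹ θ * hjacobi -
    gaussSum β θ * jacobiSum ψ β⁻¹ * gaussSum ψ⁻¹ θ * hsign

theorem sum_gaussPochhammer_sq_mul [Fintype (MulChar F K)] [DecidableEq (MulChar F K)]
    [HasEnoughRootsOfUnity K (Monoid.exponent Fˣ)] (hθ : θ ≠ 1)
    {φ A β : MulChar F K} (hφ : orderOf φ = 2) (hA : A ^ 2 ≠ 1) (hβ : β ^ 2 ≠ 1) :
    ∑ χ : MulChar F K, gaussPochhammer θ (A ^ 2) (χ ^ 2) * gaussPochhammer θ 1 (χ ^ 2)⁻¹ *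
        (gaussPochhammer θ β (χ ^ 2) * gaussPochhammer θ (A⁻¹ ^ 2 * β) (χ ^ 2)⁻¹) =
      (1 - (Fintype.card F : K)) *
        (gaussSum β θ * gaussSum (A⁻¹ ^ 2 * β ^ 2) θ /
            (gaussSum (A⁻¹ ^ 2 * β) θ * gaussSum (β ^ 2) θ) +
          ∑ ψ with ψ ^ 2 = A ^ 2, gaussSum (A⁻¹ ^ 2) θ * gaussSum (ψ⁻¹ * β) θ /
            (gaussSum ψ⁻¹ θ * gaussSum (A⁻¹ ^ 2 * β) θ)) := by
  have hβ_ne : β ≠ 1 := by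
    rintro rfl
    exact hβ (one_pow 2)
  have hfirst : gaussSum β θ * jacobiSum (A ^ 2) (β⁻¹ ^ 2) /
        (gaussSum (A ^ 2) θ * gaussSum (A⁻¹ ^ 2 * β) θ) =
      gaussSum β θ * gaussSum (A⁻¹ ^ 2 * β ^ 2) θ /
        (gaussSum (A⁻¹ ^ 2 * β) θ * gaussSum (β ^ 2) θ) := by
    have h := gaussSum_mul_gaussSum_inv_mul hβ θ (A ^ 2)
    rw [mulChar_sq_apply_neg_one, one_mul, ← inv_pow, ← inv_pow] at h
    rw [div_eq_div_iff (mul_ne_zero (gaussSum_ne_zero hθ _) (gaussSum_ne_zero hθ _))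
      (mul_ne_zero (gaussSum_ne_zero hθ _) (gaussSum_ne_zero hθ _))]
    linear_combination -gaussSum β θ * gaussSum (A⁻¹ ^ 2 * β) θ * h
  have hroots : gaussSum β θ * (∑ ψ with ψ ^ 2 = A ^ 2, jacobiSum ψ β⁻¹) /
        (gaussSum (A ^ 2) θ * gaussSum (A⁻¹ ^ 2 * β) θ) =
      ∑ ψ with ψ ^ 2 = A ^ 2, gaussSum (A⁻¹ ^ 2) θ * gaussSum (ψ⁻¹ * β) θ /
        (gaussSum ψ⁻¹ θ * gaussSum (A⁻¹ ^ 2 * β) θ) := by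
    rw [Finset.mul_sum, Finset.sum_div]
    refine Finset.sum_congr rfl fun ψ hψ ↦ ?_
    rw [← div_div, ← div_div, gaussSum_mul_jacobiSum_div_eq_of_sq_eq_sq hθ hA hβ_ne
      (Finset.mem_filter.mp hψ).2]
  rw [← hfirst, ← hroots]
  simp only [inv_pow A, gaussPochhammer_mul_eq_jacobiSum_mul_jacobiSum hθ _ _ hβ_ne,
    ← Finset.mul_sum, sum_jacobiSum_mul_jacobiSum_eq_add_sum_sqrt hφ, mulChar_sq_apply_neg_one]
  ring

end Evaluation

section Hypergeometric

variable {F : Type} [Field F] [Fintype F]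

theorem ffHyp_eq_sum_gaussPochhammer [Fintype (MulChar F ℂ)] (θ : AddChar F ℂ) {ι : Type}
    [Fintype ι] (A B : ι → MulChar F ℂ) (lam : F) :
    ffHyp θ A B lam = -1 / ((Fintype.card F : ℂ) - 1) * ∑ χ : MulChar F ℂ,
      (∏ i, gaussPochhammer θ (A i) χ * gaussPochhammer θ (B i)⁻¹ χ⁻¹) *
        χ (-1) ^ Fintype.card ι * χ lam := by
  rw [ffHyp, Subsingleton.elim (Fintype.ofFinite (MulChar F ℂ)) ‹_›]
  simp only [gaussPochhammer, mul_inv]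

theorem ffHyp_eq_sum_gaussPochhammer_sq [Fintype (MulChar F ℂ)] {θ : AddChar F ℂ} (hθ : θ ≠ 1)
    {φ : MulChar F ℂ} (hφ : orderOf φ = 2) (A B C D : MulChar F ℂ) (lam : F) :
    ffHyp θ ![A, φ * A, B, φ * B] ![C, φ * C, D, φ * D] lam =
      -1 / ((Fintype.card F : ℂ) - 1) * ∑ χ : MulChar F ℂ,
        gaussPochhammer θ (A ^ 2) (χ ^ 2) * gaussPochhammer θ (C⁻¹ ^ 2) (χ ^ 2)⁻¹ *
          (gaussPochhammer θ (B ^ 2) (χ ^ 2) * gaussPochhammer θ (D⁻¹ ^ 2) (χ ^ 2)⁻¹) *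
          χ lam := by
  have hsign (χ : MulChar F ℂ) : χ (-1) ^ 4 = 1 := by
    rw [← map_pow, Even.neg_one_pow (by decide), map_one]
  rw [ffHyp_eq_sum_gaussPochhammer]
  congr 1
  refine Finset.sum_congr rfl fun χ _ ↦ ?_
  rw [Fintype.card_fin, hsign, mul_one, Fin.prod_univ_four,
    ← gaussPochhammer_mul_gaussPochhammer_inv_duplication hθ hφ A,
    ← gaussPochhammer_mul_gaussPochhammer_inv_duplication hθ hφ B]
  exact congrArg (· * χ lam) (mul_assoc _ _ _)

end Hypergeometric

open scoped Classical in
theorem stmt9 {F : Type} [Field F] [Fintype F] (hodd : Odd (Fintype.card F))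
    (θ : AddChar F ℂ) (hθ : θ ≠ 1)
    (φ : MulChar F ℂ) (hφ : orderOf φ = 2)
    (A B : MulChar F ℂ) (hA : A ^ 2 ≠ 1) (hB : B ^ 4 ≠ 1) :
    letI : Fintype (MulChar F ℂ) := Fintype.ofFinite _
    ffHyp θ ![A, φ * A, B, φ * B] ![1, φ, A * B⁻¹, φ * A * B⁻¹] 1
      = gaussSum (B ^ 2) θ * gaussSum (A⁻¹ ^ 2 * B ^ 4) θ /
          (gaussSum (A⁻¹ ^ 2 * B ^ 2) θ * gaussSum (B ^ 4) θ)
        + ∑ R ∈ Finset.univ.filter (fun R : MulChar F ℂ => R ^ 2 = A ^ 2),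
            gaussSum (A⁻¹ ^ 2) θ * gaussSum (R⁻¹ * B ^ 2) θ /
              (gaussSum R⁻¹ θ * gaussSum (A⁻¹ ^ 2 * B ^ 2) θ) := by
  let : Fintype (MulChar F ℂ) := Fintype.ofFinite _
  have hB_four : B ^ 4 = (B ^ 2) ^ 2 := pow_mul B 2 2
  have hcard : (Fintype.card F : ℂ) - 1 ≠ 0 :=
    sub_ne_zero.mpr (Nat.cast_ne_one.mpr Fintype.one_lt_card.ne')
  have hlower : (A * B⁻¹)⁻¹ ^ 2 = A⁻¹ ^ 2 * B ^ 2 := by rw [mul_inv, inv_inv, mul_pow]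
  have hreduce := ffHyp_eq_sum_gaussPochhammer_sq hθ hφ A B 1 (A * B⁻¹) 1
  simp only [map_one, mul_one, inv_one, one_pow, ← mul_assoc φ, hlower,
    sum_gaussPochhammer_sq_mul hθ hφ hA (hB_four ▸ hB)] at hreduce
  rw [hreduce, hB_four, div_mul_eq_mul_div, ← mul_assoc, div_eq_iff hcard]
  ring
end
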